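/- Let φ : ℝ → ℝ be differentiable with ‖φ‖_∞ ≤ C and ‖φ'‖_∞ ≤ C, let n = max(k, m) ≥ 3, let v, v' ∈ ℝ^k satisfy ‖v‖² = ‖v'‖² = k, let M be distributed according to the Haar measure on SO(n), and let V = √(n/k)·M₀ where M₀ is the top-left m×k submatrix of M. Define g(x, x') = (1/m) φ(x)ᵀ φ(x'). Then for every r ≥ 0, P(|g(Vv, Vv') − E[g(Vv, Vv')]| ≥ r) ≤ 2 exp(−r²(n−2)m/(32 n C⁴)). -/

import Mathlib

open MeasureTheory ProbabilityTheory Matrix Kronecker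
open scoped ENNReal NNReal

noncomputable section

instance {m n : Type*} : MeasurableSpace (Matrix m n ℝ) :=
  show MeasurableSpace (m → n → ℝ) from inferInstance

/-- `μ` is the Haar probability measure on the group `O(n)` of `n × n` real orthogonal
matrices: it is a probability measure, it is supported on orthogonal matrices, and it is
invariant under (left) translation by any orthogonal matrix. -/
def IsHaarO (n : ℕ) (μ : Measure (Matrix (Fin n) (Fin n) ℝ)) : Prop :=
  IsProbabilityMeasure μ ∧
  (∀ᵐ M ∂μ, Mᵀ * M = 1) ∧
  ∀ Q : Matrix (Fin n) (Fin n) ℝ, Qᵀ * Q = 1 → μ.map (fun M => Q * M) = μ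

/-- `μ` is the Haar probability measure on `SO(n)`: a probability measure supported on
orthogonal matrices of determinant one, invariant under left translation by `SO(n)`. -/
def IsHaarSO (n : ℕ) (μ : Measure (Matrix (Fin n) (Fin n) ℝ)) : Prop :=
  IsProbabilityMeasure μ ∧
  (∀ᵐ M ∂μ, Mᵀ * M = 1 ∧ M.det = 1) ∧
  ∀ Q : Matrix (Fin n) (Fin n) ℝ, Qᵀ * Q = 1 → Q.det = 1 →
    μ.map (fun M => Q * M) = μ

/-- The map taking an `n × n` matrix to `√(n/k)` times its top-left `m × k` submatrix. -/
def suoOfHaar {m k n : ℕ} (hm : m ≤ n) (hk : k ≤ n)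
    (M : Matrix (Fin n) (Fin n) ℝ) : Matrix (Fin m) (Fin k) ℝ :=
  Real.sqrt ((n : ℝ) / (k : ℝ)) • M.submatrix (Fin.castLE hm) (Fin.castLE hk)

/-- `ν` is the scaled-corrected uniform orthogonal (SUO) distribution on `m × k` matrices:
the law of `√(n/k) • W₀` where `n = max k m` and `W₀` is the top-left `m × k` submatrix of
a Haar-distributed `n × n` orthogonal matrix. -/
def IsSUO (m k : ℕ) (ν : Measure (Matrix (Fin m) (Fin k) ℝ)) : Prop :=
  ∃ μ : Measure (Matrix (Fin (max k m)) (Fin (max k m)) ℝ),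
    IsHaarO (max k m) μ ∧
    ν = μ.map (suoOfHaar (le_max_right k m) (le_max_left k m))

/-- The kernel function `κ_f(z, z') = (1/m) f(z)ᵀ f(z')` of the combined layer
`f(z) = φ(W z)`, with `φ` applied elementwise. -/
def kernelF {m k : ℕ} (φ : ℝ → ℝ) (W : Matrix (Fin m) (Fin k) ℝ)
    (z z' : Fin k → ℝ) : ℝ :=
  (∑ i, φ (W.mulVec z i) * φ (W.mulVec z' i)) / (m : ℝ)

/-- The input covariance matrix `Σ_{z,z'} = (1/k) [[zᵀz, zᵀz'], [z'ᵀz, z'ᵀz']]`. -/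
def covMat {k : ℕ} (z z' : Fin k → ℝ) : Matrix (Fin 2) (Fin 2) ℝ :=
  (k : ℝ)⁻¹ • !![z ⬝ᵥ z, z ⬝ᵥ z'; z' ⬝ᵥ z, z' ⬝ᵥ z']

/-- The approximate kernel function `κ̃_f(Σ) = E_{u ∼ N(0, Σ)}[φ(u₁) φ(u₂)]`, realized by
pushing a pair of independent standard Gaussians through the Cholesky factor of `Σ`. -/
def approxKernel (φ : ℝ → ℝ) (S : Matrix (Fin 2) (Fin 2) ℝ) : ℝ :=
  ∫ p : ℝ × ℝ,
      φ (Real.sqrt (S 0 0) * p.1) *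
      φ ((S 1 0 / Real.sqrt (S 0 0)) * p.1 +
          Real.sqrt (S 1 1 - (S 1 0) ^ 2 / S 0 0) * p.2)
    ∂((gaussianReal 0 1).prod (gaussianReal 0 1))

/-- `γ` is the law of a centered (jointly) Gaussian random vector indexed by `ι` with
covariance matrix `A`: every linear functional of it is a centered real Gaussian with the
corresponding variance. -/
def IsGaussianLaw {ι : Type*} [Fintype ι] (A : Matrix ι ι ℝ)
    (γ : Measure (ι → ℝ)) : Prop :=
  IsProbabilityMeasure γ ∧
  ∀ l : ι → ℝ,
    γ.map (fun y => ∑ i, l i * y i) =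
      gaussianReal 0 (Real.toNNReal (∑ i, ∑ j, l i * A i j * l j))

/-- The Frobenius (Hilbert–Schmidt) norm of a matrix. -/
def frobNorm {m n : ℕ} (M : Matrix (Fin m) (Fin n) ℝ) : ℝ :=
  Real.sqrt (∑ i, ∑ j, (M i j) ^ 2)

/-- The `ℓ²` operator norm of a square matrix. -/
def opNorm {d : ℕ} (A : Matrix (Fin d) (Fin d) ℝ) : ℝ :=
  ‖Matrix.toEuclideanCLM (𝕜 := ℝ) A‖

end

noncomputable section SOA
open scoped Matrix.Norms.Frobenius

abbrev Mt (n : ℕ) := Matrix (Fin n) (Fin n) ℝ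

def SOs (n : ℕ) : Set (Mt n) := {M | Mᵀ * M = 1 ∧ M.det = 1}

instance instBorelMt (n : ℕ) : BorelSpace (Mt n) :=
  inferInstanceAs (BorelSpace (Fin n → Fin n → ℝ))
instance instSCMt (n : ℕ) : SecondCountableTopology (Mt n) :=
  inferInstanceAs (SecondCountableTopology (Fin n → Fin n → ℝ))

lemma nsq {n : ℕ} (A : Mt n) : ‖A‖ ^ 2 = (Aᵀ * A).trace := by
  rw [Matrix.frobenius_norm_def, ← Real.sqrt_eq_rpow, Real.sq_sqrt (by positivity)]
  simp only [Matrix.trace, Matrix.diag_apply, Matrix.mul_apply, Matrix.transpose_apply]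
  rw [Finset.sum_comm]
  refine Finset.sum_congr rfl fun i _ => Finset.sum_congr rfl fun j _ => ?_
  simp [sq]

lemma nsq_sum {n : ℕ} (A : Mt n) : ‖A‖ ^ 2 = ∑ i, ∑ j, A i j ^ 2 := by
  rw [Matrix.frobenius_norm_def, ← Real.sqrt_eq_rpow, Real.sq_sqrt (by positivity)]
  simp

lemma so_mul_tr {n : ℕ} {M : Mt n} (h : M ∈ SOs n) : M * Mᵀ = 1 :=
  mul_eq_one_comm.1 h.1
lemma so_mul {n : ℕ} {M N : Mt n} (h : M ∈ SOs n) (h' : N ∈ SOs n) : M * N ∈ SOs n := by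
  refine ⟨?_, by rw [Matrix.det_mul, h.2, h'.2, one_mul]⟩
  rw [Matrix.transpose_mul, Matrix.mul_assoc, ← Matrix.mul_assoc Mᵀ, h.1, Matrix.one_mul, h'.1]
lemma so_tr {n : ℕ} {M : Mt n} (h : M ∈ SOs n) : Mᵀ ∈ SOs n :=
  ⟨by rw [Matrix.transpose_transpose]; exact so_mul_tr h, by rw [Matrix.det_transpose, h.2]⟩
lemma so_one {n : ℕ} : (1 : Mt n) ∈ SOs n := ⟨by simp, by simp⟩

lemma norm_orth_mul {n : ℕ} {Q : Mt n} (h : Qᵀ * Q = 1) (A : Mt n) : ‖Q * A‖ = ‖A‖ := by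
  rw [← sq_eq_sq₀ (norm_nonneg _) (norm_nonneg _), nsq, nsq, Matrix.transpose_mul,
    Matrix.mul_assoc, ← Matrix.mul_assoc Qᵀ, h, Matrix.one_mul]
lemma norm_mul_orth {n : ℕ} {Q : Mt n} (h : Qᵀ * Q = 1) (A : Mt n) : ‖A * Q‖ = ‖A‖ := by
  rw [← Matrix.frobenius_norm_transpose, Matrix.transpose_mul, norm_orth_mul,
    Matrix.frobenius_norm_transpose]
  rw [Matrix.transpose_transpose]; exact mul_eq_one_comm.1 h
lemma norm_conj {n : ℕ} {Q : Mt n} (h : Q ∈ SOs n) (A : Mt n) : ‖Q * A * Qᵀ‖ = ‖A‖ := by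
  rw [norm_mul_orth (so_tr h).1, norm_orth_mul h.1]

def Jm {n : ℕ} (p : Fin n × Fin n) : Mt n :=
  Matrix.single p.1 p.2 1 - Matrix.single p.2 p.1 1

lemma Jm_tr {n : ℕ} (p : Fin n × Fin n) : (Jm p)ᵀ = - Jm p := by
  simp [Jm]

lemma Jm_sq {n : ℕ} {p : Fin n × Fin n} (h : p.1 ≠ p.2) :
    Jm p * Jm p = - (Matrix.single p.1 p.1 1 + Matrix.single p.2 p.2 1) := by
  simp [Jm, Matrix.sub_mul, Matrix.mul_sub, h, h.symm]
  abel

lemma Jm_eq {n : ℕ} {p : Fin n × Fin n} (h : p.1 = p.2) : Jm p = 0 := by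
  simp [Jm, h]

lemma Jm_cube {n : ℕ} (p : Fin n × Fin n) : Jm p * Jm p * Jm p = - Jm p := by
  by_cases h : p.1 = p.2
  · simp [Jm_eq h]
  · rw [Jm_sq h]
    simp [Jm, Matrix.add_mul, Matrix.mul_sub, h, Ne.symm h]
    abel

lemma norm_Jm {n : ℕ} (p : Fin n × Fin n) : ‖Jm p‖ ≤ 2 := by
  refine (norm_sub_le _ _).trans ?_
  have : ∀ a b : Fin n, ‖(Matrix.single a b 1 : Mt n)‖ = 1 := by
    intro a b
    rw [← sq_eq_sq₀ (norm_nonneg _) (by norm_num), nsq]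
    simp
  rw [this, this]; norm_num

def Rm {n : ℕ} (e : ℝ) (p : Fin n × Fin n) : Mt n :=
  1 + Real.sin e • Jm p + (1 - Real.cos e) • (Jm p * Jm p)

lemma Rm_tr {n : ℕ} (e : ℝ) (p : Fin n × Fin n) :
    (Rm e p)ᵀ = 1 - Real.sin e • Jm p + (1 - Real.cos e) • (Jm p * Jm p) := by
  simp [Rm, Matrix.transpose_mul, Jm_tr, sub_eq_add_neg]

lemma Rm_mul {n : ℕ} (e e' : ℝ) (p : Fin n × Fin n) : Rm e p * Rm e' p = Rm (e + e') p := by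
  have h3 := Jm_cube p
  have h4 : Jm p * Jm p * (Jm p * Jm p) = - (Jm p * Jm p) := by
    rw [← Matrix.mul_assoc, h3, Matrix.neg_mul]
  have h3' : Jm p * (Jm p * Jm p) = - Jm p := by rw [← Matrix.mul_assoc, h3]
  simp only [Rm, Matrix.add_mul, Matrix.mul_add, Matrix.one_mul, Matrix.mul_one,
    Matrix.smul_mul, Matrix.mul_smul, h3, h4, h3', Real.sin_add, Real.cos_add]
  module

lemma Rm_zero {n : ℕ} (p : Fin n × Fin n) : Rm 0 p = 1 := by simp [Rm]

lemma Rm_tr' {n : ℕ} (e : ℝ) (p : Fin n × Fin n) : (Rm e p)ᵀ = Rm (-e) p := by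
  rw [Rm_tr, Rm]; simp [sub_eq_add_neg]

lemma Rm_mem {n : ℕ} (e : ℝ) (p : Fin n × Fin n) : Rm e p ∈ SOs n := by
  have ho : ∀ e, (Rm e p)ᵀ * Rm e p = 1 := fun e => by
    rw [Rm_tr', Rm_mul, neg_add_cancel, Rm_zero]
  refine ⟨ho e, ?_⟩
  have h1 : Rm e p = (Rm (e/2) p) * Rm (e/2) p := by rw [Rm_mul]; ring_nf
  have h2 := congrArg Matrix.det (ho (e/2))
  rw [Matrix.det_mul, Matrix.det_transpose, Matrix.det_one] at h2
  rw [h1, Matrix.det_mul, h2]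

lemma skew_decomp {n : ℕ} {A : Mt n} (hA : Aᵀ = -A) :
    A = ∑ p : Fin n × Fin n, (A p.1 p.2 / 2) • Jm p := by
  have hs : ∀ i j, A j i = - A i j := fun i j => by
    have := congrFun (congrFun hA i) j; simpa using this
  have e1 : A = ∑ p : Fin n × Fin n, (A p.1 p.2) • (Matrix.single p.1 p.2 1 : Mt n) := by
    conv_lhs => rw [Matrix.matrix_eq_sum_single A]
    rw [Fintype.sum_prod_type]; simp
  have e2 : -A = ∑ p : Fin n × Fin n, (A p.1 p.2) • (Matrix.single p.2 p.1 1 : Mt n) := by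
    conv_lhs => rw [← hA, Matrix.matrix_eq_sum_single A]
    rw [Fintype.sum_prod_type, ]; simp [Matrix.transpose_sum]
  have : A = (1/2 : ℝ) • (A - (-A)) := by module
  conv_lhs => rw [this, e2]
  nth_rewrite 1 [e1]
  rw [← Finset.sum_sub_distrib, Finset.smul_sum]
  refine Finset.sum_congr rfl fun p _ => ?_
  simp only [Jm]; module

lemma sum_JJ {n : ℕ} : ∑ p : Fin n × Fin n, Jm p * Jm p = (-2 * ((n : ℝ) - 1)) • (1 : Mt n) := by
  ext i j
  rw [Fintype.sum_prod_type]
  simp only [Matrix.sum_apply, Jm, Matrix.sub_mul, Matrix.mul_sub]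
  simp only [Matrix.sub_apply]
  have h1 : ∀ x y : Fin n, (Matrix.single x y (1:ℝ) * Matrix.single x y 1 : Mt n) i j =
     if x = y then (if x = i ∧ x = j then 1 else 0) else 0 := by
    intro x y
    by_cases h : x = y
    · subst h; simp [Matrix.single_apply]
    · rw [Matrix.single_mul_single_of_ne _ _ _ _ (Ne.symm h)]; simp [h]
  simp only [h1, Matrix.single_mul_single_same]
  simp only [Finset.sum_sub_distrib]
  simp [Matrix.single_apply, Matrix.one_apply, Finset.sum_ite, ite_and]
  by_cases h : i = j
  · subst h; simp; ring
  · simp [h]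

lemma sum_AJAJ {n : ℕ} {A : Mt n} (hA : Aᵀ = -A) :
    ∑ p : Fin n × Fin n, (A * Jm p * (A * Jm p)).trace = 2 * ‖A‖ ^ 2 := by
  have hs : ∀ i j, A j i = - A i j := fun i j => by
    have := congrFun (congrFun hA i) j; simpa using this
  have hd : ∀ i, A i i = 0 := fun i => by have := hs i i; linarith
  rw [nsq_sum, Fintype.sum_prod_type, Finset.mul_sum]
  refine Finset.sum_congr rfl fun a _ => ?_
  rw [Finset.mul_sum]
  refine Finset.sum_congr rfl fun b _ => ?_
  have key : ∀ a b c d : Fin n, (A * Matrix.single a b 1 * (A * Matrix.single c d 1)).trace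
      = A d a * A b c := by
    intro a b c d
    rw [← Matrix.mul_assoc, Matrix.mul_assoc A, Matrix.mul_assoc A,
      Matrix.single_mul_mul_single, Matrix.trace_mul_single]
    simp
  simp only [Jm, Matrix.mul_sub, Matrix.sub_mul, Matrix.trace_sub, key, hd]
  rw [hs a b]; ring

lemma sum_AJJ {n : ℕ} {A : Mt n} (hA : Aᵀ = -A) :
    ∑ p : Fin n × Fin n, (A * (Jm p * Jm p) * (A * (Jm p * Jm p))).trace = - 2 * ‖A‖ ^ 2 := by
  have hs : ∀ i j, A j i = - A i j := fun i j => by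
    have := congrFun (congrFun hA i) j; simpa using this
  have hd : ∀ i, A i i = 0 := fun i => by have := hs i i; linarith
  rw [nsq_sum, Fintype.sum_prod_type, Finset.mul_sum]
  refine Finset.sum_congr rfl fun a _ => ?_
  rw [Finset.mul_sum]
  refine Finset.sum_congr rfl fun b _ => ?_
  have key : ∀ a b c d : Fin n, (A * Matrix.single a b 1 * (A * Matrix.single c d 1)).trace
      = A d a * A b c := by
    intro a b c d
    rw [← Matrix.mul_assoc, Matrix.mul_assoc A, Matrix.mul_assoc A,
      Matrix.single_mul_mul_single, Matrix.trace_mul_single]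
    simp
  by_cases h : a = b
  · subst h; simp [Jm_eq, hd]
  · rw [Jm_sq (p := (a,b)) h]
    simp only [Matrix.mul_add, Matrix.add_mul, Matrix.mul_neg, Matrix.neg_mul,
      Matrix.trace_neg, Matrix.trace_add, key, hd]
    have := hs a b
    rw [this]; ring

/-- the contraction identity -/
lemma contr_id {n : ℕ} (e : ℝ) {A : Mt n} (hA : Aᵀ = -A) :
    ∑ p : Fin n × Fin n, ‖A + Rm e p * A * (Rm e p)ᵀ‖ ^ 2
      = 4 * ((n:ℝ)^2 - 2 * (1 - Real.cos e) * ((n:ℝ) - 2)) * ‖A‖ ^ 2 := by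
  set s := Real.sin e with hs
  set d := 1 - Real.cos e with hd
  have hsd : s ^ 2 + d ^ 2 = 2 * d := by
    have := Real.sin_sq_add_cos_sq e
    rw [hs, hd]; nlinarith
  have hAA : (A * A).trace = - ‖A‖ ^ 2 := by rw [nsq, hA]; simp
  have term : ∀ p : Fin n × Fin n, ‖A + Rm e p * A * (Rm e p)ᵀ‖ ^ 2 =
      4 * ‖A‖ ^ 2 - 2 * (2 * d * (A * A * (Jm p * Jm p)).trace
        + d ^ 2 * (A * (Jm p * Jm p) * (A * (Jm p * Jm p))).trace
        - s ^ 2 * (A * Jm p * (A * Jm p)).trace) := by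
    intro p
    set R := Rm e p with hR
    have hRR : Rᵀ * R = 1 := (Rm_mem e p).1
    have c1 : ‖R * A * Rᵀ‖ ^ 2 = ‖A‖ ^ 2 := by rw [norm_conj (Rm_mem e p)]
    have c2 : ‖A + R * A * Rᵀ‖ ^ 2 = ‖A‖^2 + ‖R * A * Rᵀ‖ ^ 2 +
        2 * (Aᵀ * (R * A * Rᵀ)).trace := by
      rw [nsq, nsq, nsq]
      rw [Matrix.transpose_add, Matrix.add_mul, Matrix.mul_add, Matrix.mul_add, Matrix.trace_add,
        Matrix.trace_add, Matrix.trace_add]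
      have : ((R * A * Rᵀ)ᵀ * A).trace = (Aᵀ * (R * A * Rᵀ)).trace := by
        rw [← Matrix.trace_transpose, Matrix.transpose_mul, Matrix.transpose_transpose]
      rw [this]; ring
    have c3 : (A * (R * A * Rᵀ)).trace = (A * A).trace + 2 * d * (A * A * (Jm p * Jm p)).trace
        + d ^ 2 * (A * (Jm p * Jm p) * (A * (Jm p * Jm p))).trace
        - s ^ 2 * (A * Jm p * (A * Jm p)).trace := by
      rw [hR, Rm_tr, Rm, ← hs, ← hd]
      set J := Jm p
      set P := J * J with hP
      have t1 : (A * (P * A)).trace = (A * (A * P)).trace := by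
        rw [Matrix.trace_mul_comm, Matrix.mul_assoc, Matrix.trace_mul_comm, Matrix.mul_assoc]
      have t2 : (A * (J * A)).trace = (A * (A * J)).trace := by
        rw [Matrix.trace_mul_comm, Matrix.mul_assoc, Matrix.trace_mul_comm, Matrix.mul_assoc]
      have t3 : (A * (J * (A * P))).trace = (A * (P * (A * J))).trace := by
        rw [← Matrix.mul_assoc, Matrix.trace_mul_comm, Matrix.mul_assoc]
      simp only [Matrix.mul_add, Matrix.add_mul, Matrix.mul_sub, Matrix.sub_mul, Matrix.smul_mul,
        Matrix.mul_smul, Matrix.one_mul, Matrix.mul_one, Matrix.trace_add, Matrix.trace_sub,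
        Matrix.trace_smul, smul_eq_mul, Matrix.mul_assoc, t1, t2, t3]
      ring
    rw [c2, c1, hA, Matrix.neg_mul, Matrix.trace_neg, c3, hAA]; ring
  simp only [term]
  have hJ : ∑ p : Fin n × Fin n, (A * A * (Jm p * Jm p)).trace = 2 * ((n:ℝ) - 1) * ‖A‖^2 := by
    rw [← Matrix.trace_sum, ← Matrix.mul_sum, sum_JJ, Matrix.mul_smul, Matrix.trace_smul,
      Matrix.mul_one, hAA, smul_eq_mul]; ring
  simp only [Finset.sum_sub_distrib, ← Finset.mul_sum, Finset.sum_add_distrib]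
  rw [hJ, sum_AJAJ hA, sum_AJJ hA]
  simp only [Finset.sum_const, Finset.card_univ, Fintype.card_prod, Fintype.card_fin, nsmul_eq_mul]
  push_cast
  linear_combination 4 * ‖A‖^2 * hsd

/-- the frame bound -/
lemma frame_bd {n : ℕ} {l : Mt n → ℝ} (hl : IsLinearMap ℝ l) {L : ℝ} (hL : 0 ≤ L)
    (hb : ∀ A : Mt n, Aᵀ = -A → |l A| ≤ L * ‖A‖) {Q : Mt n} (hQ : Q ∈ SOs n) :
    ∑ p : Fin n × Fin n, (l (Q * Jm p * Qᵀ)) ^ 2 ≤ 4 * L ^ 2 := by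
  set ℓ : Mt n →ₗ[ℝ] ℝ := hl.mk' l
  have hℓ : ∀ A, ℓ A = l A := fun A => rfl
  set S := ∑ p : Fin n × Fin n, (l (Q * Jm p * Qᵀ)) ^ 2 with hS
  set X : Mt n := Matrix.of fun a b => l (Q * Jm (a, b) * Qᵀ) with hX
  have hJs : ∀ a b : Fin n, Jm (b, a) = - Jm (a, b) := fun a b => by simp [Jm]
  have hXs : Xᵀ = - X := by
    ext a b
    simp only [hX, Matrix.transpose_apply, Matrix.of_apply, Matrix.neg_apply]
    rw [hJs a b, ← hℓ, ← hℓ, Matrix.mul_neg, Matrix.neg_mul, map_neg]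
  have h1 := skew_decomp hXs
  have hXn : ‖X‖ ^ 2 = S := by
    rw [nsq_sum, hS, Fintype.sum_prod_type]; rfl
  set A := Q * X * Qᵀ with hA
  have hAs : Aᵀ = -A := by
    rw [hA, Matrix.transpose_mul, Matrix.transpose_mul, hXs, Matrix.transpose_transpose]
    simp [Matrix.mul_assoc]
  have hAn : ‖A‖ = ‖X‖ := norm_conj hQ X
  have hlA : l A = S / 2 := by
    rw [hA, h1, ← hℓ, Matrix.mul_sum, Matrix.sum_mul, map_sum, hS, Finset.sum_div]
    refine Finset.sum_congr rfl fun p _ => ?_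
    rw [Matrix.mul_smul, Matrix.smul_mul, map_smul, hℓ, smul_eq_mul]
    simp only [hX, Matrix.of_apply]; ring
  have h2 := hb A hAs
  rw [hlA, hAn] at h2
  have hSn : 0 ≤ S := by rw [← hXn]; positivity
  rw [abs_of_nonneg (by positivity), ← hXn] at h2
  rw [← hXn]
  have h3 : ‖X‖ ≤ 2 * L := by
    rcases eq_or_lt_of_le (norm_nonneg X) with h | h
    · rw [← h]; positivity
    · have : ‖X‖ * ‖X‖ ≤ 2 * L * ‖X‖ := by nlinarith
      exact le_of_mul_le_mul_right this h
  calc ‖X‖^2 ≤ (2 * L)^2 := by gcongr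
    _ = _ := by ring
end SOA

noncomputable section SOB
open scoped Matrix.Norms.Frobenius

lemma so_norm {n : ℕ} {M : Mt n} (h : M ∈ SOs n) : ‖M‖ ^ 2 = n := by
  rw [nsq, h.1]; simp

lemma so_closed (n : ℕ) : IsClosed (SOs n) := by
  apply IsClosed.inter
  · exact isClosed_eq (by fun_prop) continuous_const
  · exact isClosed_eq (by fun_prop) continuous_const

instance instProperMt (n : ℕ) : ProperSpace (Mt n) := FiniteDimensional.proper ℝ _

lemma so_compact (n : ℕ) : IsCompact (SOs n) := by
  refine Metric.isCompact_of_isClosed_isBounded (so_closed n) ?_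
  refine (Metric.isBounded_closedBall (x := (0 : Mt n)) (r := n + 1)).subset ?_
  intro M hM
  have := so_norm hM
  rw [mem_closedBall_zero_iff]
  have h0 : (0:ℝ) ≤ n := Nat.cast_nonneg n
  nlinarith [norm_nonneg M]

/-- probability measures carried by SO(n) -/
structure OnSO {n : ℕ} (ν : Measure (Mt n)) : Prop where
  prob : IsProbabilityMeasure ν
  ae : ∀ᵐ M ∂ν, M ∈ SOs n

lemma OnSO.int {n : ℕ} {ν : Measure (Mt n)} (h : OnSO ν) {f : Mt n → ℝ} (hf : Continuous f) :
    Integrable f ν := by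
  have := h.prob
  obtain ⟨c, hc⟩ := (so_compact n).exists_bound_of_continuousOn hf.continuousOn
  refine Integrable.of_bound hf.aestronglyMeasurable c ?_
  filter_upwards [h.ae] with M hM using hc M hM

lemma OnSO.mono {n : ℕ} {ν : Measure (Mt n)} (h : OnSO ν) {f g : Mt n → ℝ} (hf : Continuous f)
    (hg : Continuous g) (hfg : ∀ M ∈ SOs n, f M ≤ g M) : ∫ M, f M ∂ν ≤ ∫ M, g M ∂ν := by
  refine integral_mono_ae (h.int hf) (h.int hg) ?_
  filter_upwards [h.ae] with M hM using hfg M hM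

lemma OnSO.le_const {n : ℕ} {ν : Measure (Mt n)} (h : OnSO ν) {f : Mt n → ℝ} (hf : Continuous f)
    {c : ℝ} (hfg : ∀ M ∈ SOs n, f M ≤ c) : ∫ M, f M ∂ν ≤ c := by
  have := h.prob
  refine (h.mono hf (g := fun _ => c) continuous_const hfg).trans ?_
  simp

lemma OnSO.abs_le {n : ℕ} {ν : Measure (Mt n)} (h : OnSO ν) {f : Mt n → ℝ}
    {c : ℝ} (hfg : ∀ M ∈ SOs n, |f M| ≤ c) : |∫ M, f M ∂ν| ≤ c := by
  have := h.prob
  have := norm_integral_le_of_norm_le_const (μ := ν) (f := f) (C := c)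
    (by filter_upwards [h.ae] with M hM using hfg M hM)
  simpa using this

structure Nice {n : ℕ} (f : Mt n → ℝ) (g : Mt n → Mt n → ℝ) (K : ℝ) : Prop where
  bd : ∀ M, |f M| ≤ K
  lin : ∀ M, IsLinearMap ℝ (g M)
  gb : ∀ M H, |g M H| ≤ K * ‖H‖
  gl : ∀ M M' H, |g M H - g M' H| ≤ K * ‖M - M'‖ * ‖H‖
  tay : ∀ M H, |f (M + H) - f M - g M H| ≤ K * ‖H‖ ^ 2

def TLip {n : ℕ} (g : Mt n → Mt n → ℝ) (L : ℝ) : Prop :=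
  ∀ M ∈ SOs n, ∀ A : Mt n, Aᵀ = -A → |g M (A * M)| ≤ L * ‖A‖

namespace Nice
variable {n : ℕ} {f : Mt n → ℝ} {g : Mt n → Mt n → ℝ} {K : ℝ}

lemma K0 (h : Nice f g K) : 0 ≤ K := (abs_nonneg _).trans (h.bd 0)

lemma hasF (h : Nice f g K) (M : Mt n) :
    HasFDerivAt f (LinearMap.toContinuousLinearMap ((h.lin M).mk' (g M))) M := by
  refine hasFDerivAt_iff_isLittleO_nhds_zero.2 ?_
  have h1 : (fun H : Mt n => f (M + H) - f M - g M H) =O[nhds 0] fun H => ‖H‖ ^ 2 :=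
    Asymptotics.IsBigO.of_bound K (Filter.Eventually.of_forall fun H => by
      simpa using h.tay M H)
  have h2 : (fun H : Mt n => ‖H‖ ^ 2) =o[nhds 0] fun H => H := by
    exact (Asymptotics.isLittleO_norm_pow_id (E' := Mt n) (n := 2) (by norm_num))
  exact h1.trans_isLittleO h2

lemma cont (h : Nice f g K) : Continuous f :=
  continuous_iff_continuousAt.2 fun M => (h.hasF M).continuousAt

lemma gadd (h : Nice f g K) (M H H' : Mt n) : g M (H + H') = g M H + g M H' := (h.lin M).map_add _ _
lemma gsub (h : Nice f g K) (M H H' : Mt n) : g M (H - H') = g M H - g M H' := (h.lin M).map_sub _ _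
lemma gsmul (h : Nice f g K) (M : Mt n) (c : ℝ) (H : Mt n) : g M (c • H) = c * g M H :=
  (h.lin M).map_smul _ _

lemma gcont (h : Nice f g K) : Continuous (fun p : Mt n × Mt n => g p.1 p.2) := by
  rw [continuous_iff_continuousAt]
  rintro ⟨M, H⟩
  rw [ContinuousAt, tendsto_iff_norm_sub_tendsto_zero]
  have hb : ∀ p : Mt n × Mt n, ‖g p.1 p.2 - g M H‖ ≤ K * ‖p.1 - M‖ * ‖p.2‖ + K * ‖p.2 - H‖ := by
    intro p
    have e : g p.1 p.2 - g M H = (g p.1 p.2 - g M p.2) + g M (p.2 - H) := by rw [h.gsub]; ring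
    rw [e]
    exact (abs_add_le _ _).trans (add_le_add (h.gl _ _ _) (h.gb _ _))
  refine squeeze_zero (fun _ => norm_nonneg _) hb ?_
  have : Continuous (fun p : Mt n × Mt n => K * ‖p.1 - M‖ * ‖p.2‖ + K * ‖p.2 - H‖) := by fun_prop
  simpa using this.tendsto (M, H)

lemma gcont' (h : Nice f g K) {X Y : Mt n → Mt n} (hX : Continuous X) (hY : Continuous Y) :
    Continuous (fun N => g (X N) (Y N)) := h.gcont.comp (hX.prodMk hY)

end Nice

def Tf {n : ℕ} (ν : Measure (Mt n)) (f : Mt n → ℝ) (M : Mt n) : ℝ := ∫ N, f (N * M) ∂ν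
def Tg {n : ℕ} (ν : Measure (Mt n)) (g : Mt n → Mt n → ℝ) (M H : Mt n) : ℝ :=
  ∫ N, g (N * M) (N * H) ∂ν

lemma Nice.T {n : ℕ} {f : Mt n → ℝ} {g : Mt n → Mt n → ℝ} {K : ℝ} (h : Nice f g K)
    {ν : Measure (Mt n)} (hν : OnSO ν) : Nice (Tf ν f) (Tg ν g) K := by
  have hprob := hν.prob
  have i1 : ∀ M, Integrable (fun N => f (N * M)) ν := fun M =>
    hν.int (h.cont.comp (by fun_prop))
  have i2 : ∀ M H, Integrable (fun N => g (N * M) (N * H)) ν := fun M H =>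
    hν.int (h.gcont' (by fun_prop) (by fun_prop))
  refine ⟨fun M => hν.abs_le fun N _ => h.bd _, fun M => ⟨fun H H' => ?_, fun c H => ?_⟩,
    fun M H => hν.abs_le fun N hN => ?_, fun M M' H => ?_, fun M H => ?_⟩
  · simp only [Tg]
    rw [← integral_add (i2 M H) (i2 M H')]
    simp only [Matrix.mul_add, h.gadd]
  · simp only [Tg]
    rw [smul_eq_mul, ← integral_const_mul]
    simp only [Matrix.mul_smul, h.gsmul]
  · refine (h.gb _ _).trans_eq ?_
    rw [norm_orth_mul hN.1]
  · simp only [Tg]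
    rw [← integral_sub (i2 M H) (i2 M' H)]
    refine hν.abs_le fun N hN => ?_
    refine (h.gl _ _ _).trans_eq ?_
    rw [← Matrix.mul_sub, norm_orth_mul hN.1, norm_orth_mul hN.1]
  · simp only [Tf, Tg]
    rw [← integral_sub (i1 _) (i1 _), 
      ← integral_sub (f := fun N => f (N * (M + H)) - f (N * M)) ((i1 _).sub (i1 _)) (i2 _ _)]
    refine hν.abs_le fun N hN => ?_
    rw [Matrix.mul_add]
    refine (h.tay _ _).trans_eq ?_
    rw [norm_orth_mul hN.1]

/-- remainder of a plane rotation -/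
lemma Rm_rem {n : ℕ} {t : ℝ} (h0 : 0 ≤ t) (h1 : t ≤ 1) (p : Fin n × Fin n) :
    ‖Rm t p - 1 - t • Jm p‖ ≤ 4 * t ^ 2 := by
  have e : Rm t p - 1 - t • Jm p = (Real.sin t - t) • Jm p + (1 - Real.cos t) • (Jm p * Jm p) := by
    rw [Rm]; module
  have hs : |Real.sin t - t| ≤ t ^ 2 := by
    rw [abs_sub_comm, abs_of_nonneg (by linarith [Real.sin_le h0])]
    rcases eq_or_lt_of_le h0 with h | h
    · simp [← h]
    · have := Real.sin_gt_sub_cube h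
      nlinarith [sq_nonneg t, mul_nonneg (sq_nonneg t) h0]
  have hc : |1 - Real.cos t| ≤ t ^ 2 / 2 := by
    rw [abs_of_nonneg (by linarith [Real.cos_le_one t])]
    linarith [Real.one_sub_sq_div_two_le_cos (x := t)]
  have hJ := norm_Jm p
  have hJJ : ‖Jm p * Jm p‖ ≤ 4 := by
    refine (norm_mul_le _ _).trans ?_
    nlinarith [norm_nonneg (Jm p)]
  rw [e]
  refine (norm_add_le _ _).trans ?_
  rw [norm_smul, norm_smul, Real.norm_eq_abs, Real.norm_eq_abs]
  have a1 := mul_le_mul hs hJ (norm_nonneg _) (by positivity)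
  have a2 := mul_le_mul hc hJJ (norm_nonneg _) (by positivity)
  linarith

lemma eq_zero_of_small {a c : ℝ} (h : ∀ t : ℝ, 0 < t → t ≤ 1 → |t * a| ≤ c * t ^ 2) : a = 0 := by
  by_contra ha
  have hpos := abs_pos.2 ha
  have hc : 0 ≤ c := by have := h 1 one_pos le_rfl; simp at this; linarith [abs_nonneg a]
  set t := min 1 (|a| / (2 * (c + 1))) with ht
  have ht0 : 0 < t := by rw [ht]; positivity
  have h1 := h t ht0 (min_le_left _ _)
  rw [abs_mul, abs_of_pos ht0] at h1
  have h2 : |a| ≤ c * t := by nlinarith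
  have h3 : t ≤ |a| / (2 * (c + 1)) := min_le_right _ _
  rw [le_div_iff₀ (by positivity)] at h3
  nlinarith

lemma conj_id {n : ℕ} {f : Mt n → ℝ} {g : Mt n → Mt n → ℝ} {K : ℝ} (h : Nice f g K)
    {ν : Measure (Mt n)} (hν : OnSO ν)
    (hc : ∀ S ∈ SOs n, ν.map (fun N => S * N * Sᵀ) = ν) {M A : Mt n} (hM : M ∈ SOs n)
    (hA : Aᵀ = -A) :
    ∫ N, g (N * M) ((A * N - N * A) * M) ∂ν = 0 := by
  have hprob := hν.prob
  have i2 : ∀ A : Mt n, Integrable (fun N => g (N * M) ((A * N - N * A) * M)) ν := fun A =>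
    hν.int (h.gcont' (by fun_prop) (by fun_prop))
  have key : ∀ p : Fin n × Fin n, ∫ N, g (N * M) ((Jm p * N - N * Jm p) * M) ∂ν = 0 := by
    intro p
    refine eq_zero_of_small (c := K * 44 + K * 48 ^ 2) fun t ht ht1 => ?_
    set S := Rm t p with hS
    have hSm : S ∈ SOs n := Rm_mem t p
    have c1 : ∫ N, f (S * N * Sᵀ * M) ∂ν = ∫ N, f (N * M) ∂ν := by
      conv_rhs => rw [← hc S hSm]
      rw [integral_map]
      · exact (by fun_prop : Continuous fun N : Mt n => S * N * Sᵀ).aemeasurable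
      · exact (h.cont.comp (by fun_prop : Continuous fun N : Mt n => N * M)).aestronglyMeasurable
    have i3 : Integrable (fun N => f (S * N * Sᵀ * M)) ν := hν.int (h.cont.comp (by fun_prop))
    have i4 : Integrable (fun N => f (N * M)) ν := hν.int (h.cont.comp (by fun_prop))
    have c2 : t * ∫ N, g (N * M) ((Jm p * N - N * Jm p) * M) ∂ν =
        - ∫ N, (f (S * N * Sᵀ * M) - f (N * M) - t * g (N * M) ((Jm p * N - N * Jm p) * M)) ∂ν := by
      rw [integral_sub (f := fun N => f (S * N * Sᵀ * M) - f (N * M)) (i3.sub i4) ((i2 _).const_mul t), integral_sub i3 i4, c1, integral_const_mul]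
      ring
    rw [c2, abs_neg]
    refine hν.abs_le fun N hN => ?_
    set X := S - 1 - t • Jm p with hX
    have hXn : ‖X‖ ≤ 4 * t ^ 2 := Rm_rem ht.le ht1 p
    have hS1 : S = 1 + t • Jm p + X := by rw [hX]; abel
    have hS2 : Sᵀ = 1 - t • Jm p + Xᵀ := by
      rw [hS1]; simp [Jm_tr, sub_eq_add_neg]
    have hXt : ‖Xᵀ‖ ≤ 4 * t ^ 2 := by rwa [Matrix.frobenius_norm_transpose]
    have hJ := norm_Jm p
    have htt : t ^ 2 ≤ t := by nlinarith
    have hb1 : ‖t • Jm p + X‖ ≤ 6 * t := by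
      refine (norm_add_le _ _).trans ?_
      rw [norm_smul, Real.norm_eq_abs, abs_of_pos ht]; nlinarith
    have hb2 : ‖- (t • Jm p) + Xᵀ‖ ≤ 6 * t := by
      refine (norm_add_le _ _).trans ?_
      rw [norm_neg, norm_smul, Real.norm_eq_abs, abs_of_pos ht]; nlinarith
    set E := (t • Jm p + X) * N * (- (t • Jm p) + Xᵀ) + X * N + N * Xᵀ with hE
    have hSN : S * N * Sᵀ = N + t • (Jm p * N - N * Jm p) + E := by
      have aux : ∀ Y Z : Mt n, (1 + Y) * N * (1 + Z) = N + (Y * N + N * Z) + Y * N * Z := by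
        intro Y Z; noncomm_ring
      have hS1' : S = 1 + (t • Jm p + X) := by rw [hX]; abel
      have hS2' : Sᵀ = 1 + (-(t • Jm p) + Xᵀ) := by rw [hS2]; abel
      rw [hE, hS2', hS1', aux]
      have e1 : (t • Jm p + X) * N = t • (Jm p * N) + X * N := by
        rw [Matrix.add_mul, Matrix.smul_mul]
      have e2 : N * (-(t • Jm p) + Xᵀ) = - (t • (N * Jm p)) + N * Xᵀ := by
        rw [Matrix.mul_add, Matrix.mul_neg, Matrix.mul_smul]
      rw [e2, e1, smul_sub]
      abel
    have hEn : ‖E‖ ≤ 44 * t ^ 2 := by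
      have e1 : ‖(t • Jm p + X) * N * (- (t • Jm p) + Xᵀ)‖ ≤ 36 * t ^ 2 := by
        refine (norm_mul_le _ _).trans ?_
        rw [norm_mul_orth hN.1]
        calc _ ≤ (6 * t) * (6 * t) := by gcongr
          _ = _ := by ring
      have e2 : ‖X * N‖ ≤ 4 * t ^ 2 := by rwa [norm_mul_orth hN.1]
      have e3 : ‖N * Xᵀ‖ ≤ 4 * t ^ 2 := by rwa [norm_orth_mul hN.1]
      calc ‖E‖ ≤ _ := norm_add₃_le
        _ ≤ _ := by linarith
    have hDn : ‖Jm p * N - N * Jm p‖ ≤ 4 := by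
      refine (norm_sub_le _ _).trans ?_
      rw [norm_mul_orth hN.1, norm_orth_mul hN.1]; linarith
    set D := Jm p * N - N * Jm p
    have hH : S * N * Sᵀ * M = N * M + (t • (D * M) + E * M) := by
      rw [hSN]; simp only [Matrix.add_mul, Matrix.smul_mul]; abel
    have hHn : ‖t • (D * M) + E * M‖ ≤ 48 * t := by
      refine (norm_add_le _ _).trans ?_
      rw [norm_smul, Real.norm_eq_abs, abs_of_pos ht, norm_mul_orth hM.1, norm_mul_orth hM.1]
      nlinarith
    have hEM : ‖E * M‖ ≤ 44 * t ^ 2 := by rwa [norm_mul_orth hM.1]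
    have t1 := h.tay (N * M) (t • (D * M) + E * M)
    have t2 := h.gb (N * M) (E * M)
    rw [h.gadd, h.gsmul] at t1
    rw [hH]
    have hK := h.K0
    have e : f (N * M + (t • (D * M) + E * M)) - f (N * M) - t * g (N * M) (D * M)
      = (f (N * M + (t • (D * M) + E * M)) - f (N * M) -
        (t * g (N * M) (D * M) + g (N * M) (E * M))) + g (N * M) (E * M) := by ring
    rw [e]
    calc _ ≤ _ := abs_add_le _ _
      _ ≤ K * ‖t • (D * M) + E * M‖ ^ 2 + K * ‖E * M‖ := add_le_add t1 t2
      _ ≤ K * (48 * t) ^ 2 + K * (44 * t ^ 2) := by gcongr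
      _ = _ := by ring
  have hsum : ∀ N, g (N * M) ((A * N - N * A) * M) =
      ∑ p : Fin n × Fin n, (A p.1 p.2 / 2) * g (N * M) ((Jm p * N - N * Jm p) * M) := by
    intro N
    have e : (A * N - N * A) * M =
        ∑ p : Fin n × Fin n, (A p.1 p.2 / 2) • ((Jm p * N - N * Jm p) * M) := by
      conv_lhs => rw [skew_decomp hA]
      rw [Matrix.sum_mul, Matrix.mul_sum, ← Finset.sum_sub_distrib, Matrix.sum_mul]
      refine Finset.sum_congr rfl fun p _ => ?_
      rw [Matrix.smul_mul, Matrix.mul_smul, ← smul_sub, Matrix.smul_mul]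
    have := map_sum ((h.lin (N * M)).mk' (g (N * M)))
      (fun p : Fin n × Fin n => (A p.1 p.2 / 2) • ((Jm p * N - N * Jm p) * M)) Finset.univ
    simp only [IsLinearMap.mk'_apply] at this
    rw [e, this]
    refine Finset.sum_congr rfl fun p _ => h.gsmul _ _ _
  simp only [hsum]
  rw [integral_finset_sum _ fun p _ => (i2 _).const_mul _]
  refine Finset.sum_eq_zero fun p _ => ?_
  rw [integral_const_mul, key, mul_zero]

lemma contract {n : ℕ} {f : Mt n → ℝ} {g : Mt n → Mt n → ℝ} {K L q : ℝ} (h : Nice f g K)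
    {ν : Measure (Mt n)} (hν : OnSO ν)
    (hc : ∀ S ∈ SOs n, ν.map (fun N => S * N * Sᵀ) = ν) (hL0 : 0 ≤ L) (hL : TLip g L)
    (hq : 0 < q)
    (hcon : ∀ A : Mt n, Aᵀ = -A → ∫ N, ‖A + N * A * Nᵀ‖ ^ 2 ∂ν = 4 * q ^ 2 * ‖A‖ ^ 2) :
    TLip (Tg ν g) (q * L) := by
  intro M hM A hA
  have hprob := hν.prob
  have i0 : Integrable (fun N => g (N * M) (N * (A * M))) ν :=
    hν.int (h.gcont' (by fun_prop) (by fun_prop))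
  have i2 : Integrable (fun N => g (N * M) ((A * N - N * A) * M)) ν :=
    hν.int (h.gcont' (by fun_prop) (by fun_prop))
  have e1 : Tg ν g M (A * M) = ∫ N, (g (N * M) (N * (A * M)) +
      (1 / 2) * g (N * M) ((A * N - N * A) * M)) ∂ν := by
    rw [integral_add i0 (i2.const_mul _), integral_const_mul, conj_id h hν hc hM hA]
    simp [Tg]
  by_cases hA0 : ‖A‖ = 0
  · have : A = 0 := norm_eq_zero.1 hA0
    subst this
    have : Tg ν g M (0 * M) = 0 := by
      rw [Matrix.zero_mul]; exact ((h.T hν).lin M).map_zero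
    rw [this]; simp
  have hA1 : 0 < ‖A‖ := lt_of_le_of_ne (norm_nonneg _) (Ne.symm hA0)
  have hpt : ∀ N ∈ SOs n, |g (N * M) (N * (A * M)) + (1 / 2) * g (N * M) ((A * N - N * A) * M)|
      ≤ L / 2 * (‖A + N * A * Nᵀ‖ ^ 2 / (4 * q * ‖A‖) + q * ‖A‖) := by
    intro N hN
    rw [← h.gsmul, ← h.gadd]
    have e2 : N * (A * M) + (1 / 2 : ℝ) • ((A * N - N * A) * M) =
        ((1 / 2 : ℝ) • (A + N * A * Nᵀ)) * (N * M) := by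
      have : N * A * Nᵀ * (N * M) = N * A * M := by
        rw [Matrix.mul_assoc (N * A), ← Matrix.mul_assoc Nᵀ, hN.1, Matrix.one_mul]
      rw [Matrix.smul_mul, Matrix.add_mul, this, Matrix.sub_mul, ← Matrix.mul_assoc,
        ← Matrix.mul_assoc]
      module
    rw [e2]
    have sk : ((1 / 2 : ℝ) • (A + N * A * Nᵀ))ᵀ = - ((1 / 2 : ℝ) • (A + N * A * Nᵀ)) := by
      rw [Matrix.transpose_smul, Matrix.transpose_add, Matrix.transpose_mul, Matrix.transpose_mul,
        hA, Matrix.transpose_transpose, ← smul_neg]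
      congr 1
      simp [Matrix.mul_assoc]; abel
    refine (hL _ (so_mul hN hM) _ sk).trans ?_
    rw [norm_smul, Real.norm_eq_abs, abs_of_pos (by norm_num : (0:ℝ) < 1/2)]
    set x := ‖A + N * A * Nᵀ‖
    have : x ≤ x ^ 2 / (4 * q * ‖A‖) + q * ‖A‖ := by
      have hp : 0 < 4 * q * ‖A‖ := by positivity
      rw [← sub_nonneg]
      have : x ^ 2 / (4 * q * ‖A‖) + q * ‖A‖ - x = (x - 2 * q * ‖A‖) ^ 2 / (4 * q * ‖A‖) := by
        field_simp; ring
      rw [this]; positivity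
    calc L * (1 / 2 * x) = L / 2 * x := by ring
      _ ≤ _ := by gcongr
  have ix : Integrable (fun N => ‖A + N * A * Nᵀ‖ ^ 2) ν := hν.int (by fun_prop)
  rw [e1]
  calc _ ≤ ∫ N, |g (N * M) (N * (A * M)) + (1 / 2) * g (N * M) ((A * N - N * A) * M)| ∂ν :=
        abs_integral_le_integral_abs
    _ ≤ ∫ N, L / 2 * (‖A + N * A * Nᵀ‖ ^ 2 / (4 * q * ‖A‖) + q * ‖A‖) ∂ν := by
        refine hν.mono ?_ (by fun_prop) hpt
        exact ((h.gcont' (by fun_prop) (by fun_prop)).add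
          ((h.gcont' (by fun_prop) (by fun_prop)).const_mul _)).abs
    _ = L / 2 * (4 * q ^ 2 * ‖A‖ ^ 2 / (4 * q * ‖A‖) + q * ‖A‖) := by
        rw [integral_const_mul, integral_add (ix.div_const _) (integrable_const _),
          integral_div, hcon A hA]
        simp
    _ = q * L * ‖A‖ := by field_simp; ring
end SOB

noncomputable section SOC
open scoped Matrix.Norms.Frobenius

structure Hr {n : ℕ} (μ : Measure (Mt n)) : Prop where
  on : OnSO μ
  inv : ∀ S ∈ SOs n, μ.map (fun M => S * M) = μ

def nu {n : ℕ} (μ : Measure (Mt n)) (e : ℝ) : Measure (Mt n) :=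
  ∑ p : Fin n × Fin n, ((n : ℝ≥0∞) ^ 2)⁻¹ • μ.map (fun Q => Q * Rm e p * Qᵀ)

lemma cjm {n : ℕ} (R : Mt n) : Measurable (fun Q : Mt n => Q * R * Qᵀ) :=
  (by fun_prop : Continuous (fun Q : Mt n => Q * R * Qᵀ)).measurable

lemma nu_apply {n : ℕ} (μ : Measure (Mt n)) (e : ℝ) {s : Set (Mt n)} (hs : MeasurableSet s) :
    nu μ e s = ∑ p : Fin n × Fin n, ((n : ℝ≥0∞) ^ 2)⁻¹ * μ ((fun Q => Q * Rm e p * Qᵀ) ⁻¹' s) := by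
  simp only [nu, Measure.coe_finset_sum, Finset.sum_apply, Measure.smul_apply, smul_eq_mul]
  refine Finset.sum_congr rfl fun p _ => ?_
  rw [Measure.map_apply (cjm _) hs]

lemma nu_on {n : ℕ} (hn : n ≠ 0) {μ : Measure (Mt n)} (h : Hr μ) (e : ℝ) : OnSO (nu μ e) := by
  have hp := h.on.prob
  constructor
  · constructor
    rw [nu_apply μ e MeasurableSet.univ]
    simp only [Set.preimage_univ, measure_univ, mul_one, Finset.sum_const, Finset.card_univ,
      Fintype.card_prod, Fintype.card_fin, nsmul_eq_mul]
    push_cast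
    rw [← sq]
    refine ENNReal.mul_inv_cancel ?_ ?_
    · simp [hn]
    · exact ENNReal.pow_ne_top (ENNReal.natCast_ne_top n)
  · rw [ae_iff]
    have hm : MeasurableSet {M : Mt n | ¬ M ∈ SOs n} := (so_closed n).measurableSet.compl
    rw [nu_apply μ e hm]
    refine Finset.sum_eq_zero fun p _ => ?_
    have : μ ((fun Q => Q * Rm e p * Qᵀ) ⁻¹' {M : Mt n | ¬ M ∈ SOs n}) = 0 := by
      refine measure_mono_null ?_ (ae_iff.1 h.on.ae)
      intro Q hQ hQ'
      exact hQ (so_mul (so_mul hQ' (Rm_mem e p)) (so_tr hQ'))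
    rw [this, mul_zero]

lemma nu_conj {n : ℕ} {μ : Measure (Mt n)} (h : Hr μ) (e : ℝ) (S : Mt n) (hS : S ∈ SOs n) :
    (nu μ e).map (fun N => S * N * Sᵀ) = nu μ e := by
  have hmm : Measurable (fun N : Mt n => S * N * Sᵀ) :=
    (by fun_prop : Continuous (fun N : Mt n => S * N * Sᵀ)).measurable
  ext s hs
  rw [Measure.map_apply hmm hs, nu_apply μ e (hmm hs), nu_apply μ e hs]
  refine Finset.sum_congr rfl fun p _ => ?_
  congr 1
  conv_rhs => rw [← h.inv S hS]
  rw [Measure.map_apply (by fun_prop : Continuous fun M : Mt n => S * M).measurable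
    (cjm _ hs)]
  congr 1
  ext Q
  simp [Matrix.mul_assoc]

lemma nu_int {n : ℕ} (hn : n ≠ 0) {μ : Measure (Mt n)} (h : Hr μ) (e : ℝ) {F : Mt n → ℝ} (hF : Continuous F) :
    ∫ N, F N ∂(nu μ e) = ((n:ℝ) ^ 2)⁻¹ * ∑ p : Fin n × Fin n, ∫ Q, F (Q * Rm e p * Qᵀ) ∂μ := by
  have hp := h.on.prob
  rw [nu, integral_finset_sum_measure, Finset.mul_sum]
  · refine Finset.sum_congr rfl fun p _ => ?_
    rw [integral_smul_measure, integral_map (cjm _).aemeasurable hF.aestronglyMeasurable]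
    simp
  · intro p _
    refine Integrable.smul_measure ?_ (by simp [hn])
    rw [integrable_map_measure hF.aestronglyMeasurable (cjm _).aemeasurable]
    exact h.on.int (hF.comp (by fun_prop))

lemma nu_contr {n : ℕ} (hn : n ≠ 0) {μ : Measure (Mt n)} (h : Hr μ) (e : ℝ) {A : Mt n}
    (hA : Aᵀ = -A) : ∫ N, ‖A + N * A * Nᵀ‖ ^ 2 ∂(nu μ e) =
      4 * (1 - 2 * (1 - Real.cos e) * ((n:ℝ) - 2) / n ^ 2) * ‖A‖ ^ 2 := by
  have hp := h.on.prob
  rw [nu_int hn h e (by fun_prop), ← integral_finset_sum]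
  · have : ∀ᵐ Q ∂μ, ∑ p : Fin n × Fin n, ‖A + Q * Rm e p * Qᵀ * A * (Q * Rm e p * Qᵀ)ᵀ‖ ^ 2 =
        4 * ((n:ℝ)^2 - 2 * (1 - Real.cos e) * ((n:ℝ) - 2)) * ‖A‖ ^ 2 := by
      filter_upwards [h.on.ae] with Q hQ
      have hA' : (Qᵀ * A * Q)ᵀ = - (Qᵀ * A * Q) := by
        simp [Matrix.transpose_mul, hA, Matrix.mul_assoc]
      have c := contr_id e hA'
      have hn : ‖Qᵀ * A * Q‖ = ‖A‖ := by
        have := norm_conj (so_tr hQ) A; rwa [Matrix.transpose_transpose] at this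
      rw [hn] at c
      rw [← c]
      refine Finset.sum_congr rfl fun p _ => ?_
      rw [← norm_conj hQ (Qᵀ * A * Q + Rm e p * (Qᵀ * A * Q) * (Rm e p)ᵀ)]
      congr 2
      have hQQ := so_mul_tr hQ
      have e1 : Q * (Qᵀ * A * Q) * Qᵀ = A := by
        rw [Matrix.mul_assoc Qᵀ, ← Matrix.mul_assoc Q, hQQ, Matrix.one_mul, Matrix.mul_assoc, hQQ,
          Matrix.mul_one]
      rw [Matrix.mul_add, Matrix.add_mul, e1]
      simp only [Matrix.transpose_mul, Matrix.transpose_transpose, Matrix.mul_assoc]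
    rw [integral_congr_ae this]
    have : (n:ℝ) ≠ 0 := by exact_mod_cast hn
    simp
    field_simp
  · intro p _
    exact h.on.int (by fun_prop)

lemma exp_le3 {z : ℝ} (hz : |z| ≤ 1) : Real.exp z ≤ 1 + z + z ^ 2 / 2 + |z| ^ 3 := by
  have := (abs_le.1 (Real.exp_bound hz (n := 3) (by norm_num))).2
  simp [Finset.sum_range_succ, Nat.factorial] at this
  have h3 : 0 ≤ |z| ^ 3 := by positivity
  nlinarith

lemma Nice.inc {n : ℕ} {f : Mt n → ℝ} {g : Mt n → Mt n → ℝ} {K : ℝ} (h : Nice f g K)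
    {M Q : Mt n} (hM : M ∈ SOs n) (hQ : Q ∈ SOs n) {e : ℝ} (he : 0 < e) (he1 : e ≤ 1)
    (p : Fin n × Fin n) :
    |f (Q * Rm e p * Qᵀ * M) - f M| ≤ 42 * K * e ∧
    (f (Q * Rm e p * Qᵀ * M) - f M) ^ 2 ≤
      e ^ 2 * (g M (Q * Jm p * Qᵀ * M)) ^ 2 + 1760 * K ^ 2 * e ^ 3 := by
  set B := Q * Jm p * Qᵀ with hB
  set X := Rm e p - 1 - e • Jm p with hX
  have hXn : ‖X‖ ≤ 4 * e ^ 2 := Rm_rem he.le he1 p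
  set E := Q * X * Qᵀ * M with hE
  have hEn : ‖E‖ ≤ 4 * e ^ 2 := by rw [hE, norm_mul_orth hM.1, norm_conj hQ]; exact hXn
  have hBn : ‖B * M‖ ≤ 2 := by rw [norm_mul_orth hM.1, norm_conj hQ]; exact norm_Jm p
  have hN : Q * Rm e p * Qᵀ * M = M + (e • (B * M) + E) := by
    have : Rm e p = 1 + e • Jm p + X := by rw [hX]; abel
    rw [this, hE, hB]
    simp only [Matrix.mul_add, Matrix.add_mul, Matrix.mul_one, so_mul_tr hQ, Matrix.mul_smul,
      Matrix.smul_mul, Matrix.one_mul, add_assoc]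
  have hK := h.K0
  have hee : e ^ 2 ≤ e := by nlinarith
  have hHn : ‖e • (B * M) + E‖ ≤ 6 * e := by
    refine (norm_add_le _ _).trans ?_
    rw [norm_smul, Real.norm_eq_abs, abs_of_pos he]; nlinarith
  have t1 := h.tay M (e • (B * M) + E)
  have t2 := h.gb M E
  have t3 := h.gb M (B * M)
  rw [h.gadd, h.gsmul] at t1
  rw [hN]
  set w := g M (B * M)
  set D := f (M + (e • (B * M) + E)) - f M
  have b1 : |D - e * w| ≤ 40 * K * e ^ 2 := by
    have e : D - e * w = (D - (e * w + g M E)) + g M E := by ring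
    rw [e]
    calc _ ≤ _ := abs_add_le _ _
      _ ≤ K * ‖_‖ ^ 2 + K * ‖E‖ := add_le_add t1 t2
      _ ≤ K * (6 * _) ^ 2 + K * (4 * _ ^ 2) := by gcongr
      _ = _ := by ring
  have b2 : |e * w| ≤ 2 * K * e := by
    rw [abs_mul, abs_of_pos he]
    have : |w| ≤ K * 2 := t3.trans (by gcongr)
    nlinarith
  have b3 : 40 * K * e ^ 2 ≤ 40 * K * e := by gcongr
  constructor
  · have : D = (D - e * w) + e * w := by ring
    rw [this]
    refine (abs_add_le _ _).trans ?_
    linarith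
  · set x := D - e * w
    have : D = e * w + x := by simp [x]
    rw [this]
    have c1 : |e * w * x| ≤ (2 * K * e) * (40 * K * e ^ 2) := by
      rw [abs_mul]; gcongr
    have c2 : x ^ 2 ≤ (40 * K * e ^ 2) ^ 2 := sq_le_sq' (by linarith [(abs_le.1 b1).1]) (abs_le.1 b1).2
    have c3 : K ^ 2 * e ^ 4 ≤ K ^ 2 * e ^ 3 := by
      gcongr ?_ * ?_
      exact pow_le_pow_of_le_one he.le he1 (by norm_num)
    have c4 := (abs_le.1 c1).2
    nlinarith

lemma local_step {n : ℕ} (hn : n ≠ 0) {μ : Measure (Mt n)} (hμ : Hr μ) {f : Mt n → ℝ}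
    {g : Mt n → Mt n → ℝ} {K L : ℝ} (h : Nice f g K) (hL0 : 0 ≤ L) (hL : TLip g L)
    {M : Mt n} (hM : M ∈ SOs n) {e : ℝ} (he : 0 < e) (he1 : e ≤ 1) {s : ℝ}
    (hs : |s| * (42 * K * e) ≤ 1) :
    ∫ N, Real.exp (s * f (N * M)) ∂(nu μ e) ≤
      Real.exp (s ^ 2 / 2 * (4 * e ^ 2 / n ^ 2 * L ^ 2) + (s ^ 2 / 2 * (1760 * K ^ 2 * e ^ 3)
        + |s| ^ 3 * (42 * K * e) ^ 3)) * Real.exp (s * Tf (nu μ e) f M) := by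
  have hp := hμ.on.prob
  have hν := nu_on hn hμ e
  have hp' := hν.prob
  have hn0 : (0:ℝ) < n := by exact_mod_cast Nat.pos_of_ne_zero hn
  have hK := h.K0
  have hfc : Continuous f := h.cont
  have cf : Continuous (fun N : Mt n => f (N * M)) := h.cont.comp (by fun_prop)
  set R := |s| ^ 3 * (42 * K * e) ^ 3 with hR
  set V := ∫ N, (f (N * M) - f M) ^ 2 ∂(nu μ e) with hV
  have hVb : V ≤ 4 * e ^ 2 / n ^ 2 * L ^ 2 + 1760 * K ^ 2 * e ^ 3 := by
    rw [hV, nu_int hn hμ e (F := fun N => (f (N * M) - f M) ^ 2) (by fun_prop),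
      ← integral_finset_sum]
    · have : ∫ Q, ∑ p : Fin n × Fin n, (f (Q * Rm e p * Qᵀ * M) - f M) ^ 2 ∂μ ≤
          e ^ 2 * (4 * L ^ 2) + n ^ 2 * (1760 * K ^ 2 * e ^ 3) := by
        refine hμ.on.le_const ?_ fun Q hQ => ?_
        · refine continuous_finset_sum _ fun p _ => ?_
          exact ((h.cont.comp (by fun_prop)).sub continuous_const).pow 2
        · calc _ ≤ ∑ p : Fin n × Fin n, (e ^ 2 * (g M (Q * Jm p * Qᵀ * M)) ^ 2 +
                1760 * K ^ 2 * e ^ 3) :=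
                Finset.sum_le_sum fun p _ => (h.inc hM hQ he he1 p).2
            _ = e ^ 2 * ∑ p : Fin n × Fin n, (g M (Q * Jm p * Qᵀ * M)) ^ 2 +
                n ^ 2 * (1760 * K ^ 2 * e ^ 3) := by
                rw [Finset.sum_add_distrib, ← Finset.mul_sum]
                simp [sq]
            _ ≤ _ := by
                have hl : IsLinearMap ℝ (fun A : Mt n => g M (A * M)) :=
                  ⟨fun A B => by rw [Matrix.add_mul, h.gadd], fun c A => by
                    rw [Matrix.smul_mul, h.gsmul, smul_eq_mul]⟩
                have := frame_bd hl hL0 (fun A hA => hL M hM A hA) hQ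
                gcongr
      calc _ ≤ ((n:ℝ) ^ 2)⁻¹ * (e ^ 2 * (4 * L ^ 2) + n ^ 2 * (1760 * K ^ 2 * e ^ 3)) := by gcongr
        _ = _ := by field_simp
    · intro p _
      exact hμ.on.int (((h.cont.comp (by fun_prop)).sub continuous_const).pow 2)
  have i1 : Integrable (fun N => f (N * M)) (nu μ e) := hν.int cf
  have i2 : Integrable (fun N => (f (N * M) - f M) ^ 2) (nu μ e) := hν.int (by fun_prop)
  have hpt : ∀ᵐ N ∂(nu μ e), Real.exp (s * f (N * M)) ≤ Real.exp (s * f M) *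
      ((1 + R) + s * (f (N * M) - f M) + s ^ 2 / 2 * (f (N * M) - f M) ^ 2) := by
    have : ∀ᵐ N ∂(nu μ e), |f (N * M) - f M| ≤ 42 * K * e := by
      rw [ae_iff]
      have hm : MeasurableSet {N : Mt n | ¬ |f (N * M) - f M| ≤ 42 * K * e} := by
        refine MeasurableSet.compl (s := {N : Mt n | |f (N * M) - f M| ≤ 42 * K * e}) ?_
        exact (isClosed_le (by fun_prop) continuous_const).measurableSet
      rw [nu_apply μ e hm]
      refine Finset.sum_eq_zero fun p _ => ?_
      have : μ ((fun Q => Q * Rm e p * Qᵀ) ⁻¹' {N : Mt n | ¬ |f (N * M) - f M| ≤ 42 * K * e}) = 0 := by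
        refine measure_mono_null ?_ (ae_iff.1 hμ.on.ae)
        intro Q hQ hQ'
        exact hQ (h.inc hM hQ' he he1 p).1
      rw [this, mul_zero]
    filter_upwards [this] with N hN
    set D := f (N * M) - f M
    have e1 : s * f (N * M) = s * f M + s * D := by simp only [D]; ring
    rw [e1, Real.exp_add]
    gcongr
    have hsD : |s * D| ≤ |s| * (42 * K * e) := by rw [abs_mul]; gcongr
    refine (exp_le3 (hsD.trans hs)).trans ?_
    have : |s * D| ^ 3 ≤ R := by rw [hR, ← mul_pow]; gcongr
    nlinarith
  have hfin : ∫ N, Real.exp (s * f (N * M)) ∂(nu μ e) ≤ Real.exp (s * f M) *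
      ((1 + R) + s * (Tf (nu μ e) f M - f M) + s ^ 2 / 2 * V) := by
    refine (integral_mono_ae (hν.int (by fun_prop)) (hν.int (by fun_prop)) hpt).trans_eq ?_
    rw [integral_const_mul, integral_add, integral_add, integral_const_mul, integral_const_mul,
      integral_sub i1 (integrable_const _)]
    · simp [Tf, hV]
    · exact integrable_const _
    · exact (i1.sub (integrable_const _)).const_mul _
    · exact (integrable_const _).add ((i1.sub (integrable_const _)).const_mul _)
    · exact i2.const_mul _
  refine hfin.trans ?_
  have hle : (1 + R) + s * (Tf (nu μ e) f M - f M) + s ^ 2 / 2 * V ≤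
      Real.exp (R + s * (Tf (nu μ e) f M - f M) + s ^ 2 / 2 * V) := by
    have := Real.add_one_le_exp (R + s * (Tf (nu μ e) f M - f M) + s ^ 2 / 2 * V)
    linarith
  calc _ ≤ Real.exp (s * f M) * Real.exp (R + s * (Tf (nu μ e) f M - f M) + s ^ 2 / 2 * V) := by gcongr
    _ ≤ _ := by
      rw [← Real.exp_add, ← Real.exp_add, Real.exp_le_exp]
      have : s ^ 2 / 2 * V ≤ s ^ 2 / 2 * (4 * e ^ 2 / n ^ 2 * L ^ 2 + 1760 * K ^ 2 * e ^ 3) := by gcongr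
      linarith

lemma T_mean {n : ℕ} {μ ν : Measure (Mt n)} (hμ : Hr μ) (hν : OnSO ν) {F : Mt n → ℝ}
    (hF : Continuous F) {c : ℝ} (hc : ∀ M, |F M| ≤ c) :
    ∫ M, ∫ N, F (N * M) ∂ν ∂μ = ∫ M, F M ∂μ := by
  have hp := hμ.on.prob
  have hp' := hν.prob
  rw [integral_integral_swap]
  · have : ∀ᵐ N ∂ν, ∫ M, F (N * M) ∂μ = ∫ M, F M ∂μ := by
      filter_upwards [hν.ae] with N hN
      conv_rhs => rw [← hμ.inv N hN]
      rw [integral_map (by fun_prop : Continuous fun M : Mt n => N * M).aemeasurable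
        hF.aestronglyMeasurable]
    rw [integral_congr_ae this]; simp
  · refine Integrable.of_bound (C := c) ?_ (Filter.Eventually.of_forall fun x => hc _)
    exact (hF.comp (by fun_prop : Continuous fun x : Mt n × Mt n => x.2 * x.1)).aestronglyMeasurable

def qq (n : ℕ) (e : ℝ) : ℝ := Real.sqrt (1 - 2 * (1 - Real.cos e) * ((n:ℝ) - 2) / n ^ 2)

lemma qq_sq {n : ℕ} (hn : 3 ≤ n) {e : ℝ} (he : 0 < e) (he1 : e ≤ 1) :
    0 < qq n e ∧ qq n e ^ 2 = 1 - 2 * (1 - Real.cos e) * ((n:ℝ) - 2) / n ^ 2 := by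
  have hn3 : (3:ℝ) ≤ n := by exact_mod_cast hn
  have hd := Real.one_sub_sq_div_two_le_cos (x := e)
  have : 0 < 1 - 2 * (1 - Real.cos e) * ((n:ℝ) - 2) / n ^ 2 := by
    rw [sub_pos, div_lt_one (by positivity)]
    have : 2 * (1 - Real.cos e) ≤ 1 := by nlinarith
    nlinarith
  exact ⟨Real.sqrt_pos.2 this, Real.sq_sqrt this.le⟩

lemma iter {n : ℕ} (hn : 3 ≤ n) {μ : Measure (Mt n)} (hμ : Hr μ) {f : Mt n → ℝ}
    {g : Mt n → Mt n → ℝ} {K L : ℝ} (h : Nice f g K) (hL0 : 0 ≤ L) (hL : TLip g L)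
    {e : ℝ} (he : 0 < e) (he1 : e ≤ 1) {s : ℝ}
    (hs : |s| * (42 * K * e) ≤ 1) (j : ℕ) :
    ∃ f' g', Nice f' g' K ∧ TLip g' (qq n e ^ j * L) ∧ ∫ M, f' M ∂μ = ∫ M, f M ∂μ ∧
      ∫ M, Real.exp (s * f M) ∂μ ≤
      Real.exp (s ^ 2 / 2 * (4 * e ^ 2 / n ^ 2 * L ^ 2) * ∑ i ∈ Finset.range j, (qq n e ^ 2) ^ i +
        j * (s ^ 2 / 2 * (1760 * K ^ 2 * e ^ 3) + |s| ^ 3 * (42 * K * e) ^ 3)) *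
        ∫ M, Real.exp (s * f' M) ∂μ := by
  have hn0 : n ≠ 0 := by omega
  have hν := nu_on hn0 hμ e
  obtain ⟨hq, hq2⟩ := qq_sq hn he he1
  set q := qq n e
  induction j with
  | zero => exact ⟨f, g, h, by simpa using hL, rfl, by simp⟩
  | succ j ih =>
    obtain ⟨f', g', h', hL', hm, hb⟩ := ih
    have hT := h'.T hν
    refine ⟨_, _, hT, ?_, ?_, ?_⟩
    · have := contract h' hν (fun S hS => nu_conj hμ e S hS) (by positivity) hL' hq
        (fun A hA => by rw [nu_contr hn0 hμ e hA, hq2])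
      rwa [← mul_assoc, ← pow_succ'] at this
    · rw [← hm]; exact T_mean hμ hν h'.cont h'.bd
    · refine hb.trans ?_
      have ce : Continuous fun M => Real.exp (s * f' M) := by have := h'.cont; fun_prop
      have hbe : ∀ M, |Real.exp (s * f' M)| ≤ Real.exp (|s| * K) := fun M => by
        rw [abs_of_pos (Real.exp_pos _), Real.exp_le_exp]
        refine (le_abs_self _).trans ?_
        rw [abs_mul]; gcongr; exact h'.bd M
      rw [← T_mean hμ hν ce hbe]
      have c1 : Continuous fun M => Real.exp (s * Tf (nu μ e) f' M) := by have := hT.cont; fun_prop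
      set a := s ^ 2 / 2 * (4 * e ^ 2 / n ^ 2 * (q ^ j * L) ^ 2) + (s ^ 2 / 2 * (1760 * K ^ 2 * e ^ 3)
        + |s| ^ 3 * (42 * K * e) ^ 3) with ha
      have : ∫ M, ∫ N, Real.exp (s * f' (N * M)) ∂(nu μ e) ∂μ ≤
          ∫ M, Real.exp a * Real.exp (s * Tf (nu μ e) f' M) ∂μ := by
        have hp := hμ.on.prob
        have hp' := hν.prob
        refine integral_mono_ae ?_ (hμ.on.int (by fun_prop)) ?_
        · refine Integrable.of_bound (C := Real.exp (|s| * K)) ?_ ?_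
          · refine AEStronglyMeasurable.integral_prod_right' (f := fun x : Mt n × Mt n => Real.exp (s * f' (x.2 * x.1))) ?_
            exact (ce.comp (by fun_prop : Continuous fun x : Mt n × Mt n => x.2 * x.1)).aestronglyMeasurable
          · exact Filter.Eventually.of_forall fun M => hν.abs_le fun N _ => hbe _
        · filter_upwards [hμ.on.ae] with M hM
          exact local_step hn0 hμ h' (by positivity) hL' hM he he1 hs
      rw [integral_const_mul] at this
      refine (mul_le_mul_of_nonneg_left this (Real.exp_pos _).le).trans_eq ?_
      rw [← mul_assoc, ← Real.exp_add, Finset.sum_range_succ, ha]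
      congr 2
      push_cast
      ring
end SOC

noncomputable section SOD
open scoped Matrix.Norms.Frobenius

def Hc {n : ℕ} (S : Mt n) : Prop := S ∈ SOs n ∧ ∃ c : ℝ, ∀ (f : Mt n → ℝ) (g : Mt n → Mt n → ℝ)
  (K L : ℝ), Nice f g K → 0 ≤ L → TLip g L → ∀ M ∈ SOs n, |f (S * M) - f M| ≤ c * L

lemma Hc_one {n : ℕ} : Hc (1 : Mt n) := ⟨so_one, 0, fun f g K L _ _ _ M _ => by simp⟩

lemma Hc_mul {n : ℕ} {S S' : Mt n} (h : Hc S) (h' : Hc S') : Hc (S * S') := by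
  obtain ⟨hS, c, hc⟩ := h
  obtain ⟨hS', c', hc'⟩ := h'
  refine ⟨so_mul hS hS', c + c', fun f g K L hN hL0 hL M hM => ?_⟩
  have h1 := hc f g K L hN hL0 hL (S' * M) (so_mul hS' hM)
  have h2 := hc' f g K L hN hL0 hL M hM
  rw [Matrix.mul_assoc]
  have e : f (S * (S' * M)) - f M = (f (S * (S' * M)) - f (S' * M)) + (f (S' * M) - f M) := by ring
  rw [e]
  refine (abs_add_le _ _).trans ?_
  linarith

lemma Hc_curve {n : ℕ} {S : Mt n} (γ B : ℝ → Mt n) (c : ℝ) (h0 : γ 0 = 1) (h1 : γ 1 = S)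
    (hγ : ∀ t, γ t ∈ SOs n) (hd : ∀ t, HasDerivAt γ (B t * γ t) t)
    (hB : ∀ t, (B t)ᵀ = - B t) (hc : ∀ t ∈ Set.Icc (0:ℝ) 1, ‖B t‖ ≤ c) : Hc S := by
  refine ⟨h1 ▸ hγ 1, c, fun f g K L hN hL0 hL M hM => ?_⟩
  have hd' : ∀ t, HasDerivAt (fun t => f (γ t * M)) (g (γ t * M) (B t * (γ t * M))) t := by
    intro t
    have e1 : HasDerivAt (fun t => γ t * M) (B t * γ t * M) t := (hd t).mul_const M
    have e2 := (hN.hasF (γ t * M)).comp_hasDerivAt t e1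
    rw [Matrix.mul_assoc] at e2
    exact e2
  have := norm_image_sub_le_of_norm_deriv_le_segment_01' (f := fun t => f (γ t * M))
    (C := c * L) (fun t _ => (hd' t).hasDerivWithinAt) (fun t ht => by
      refine (hL _ (so_mul (hγ t) hM) _ (hB t)).trans ?_
      rw [mul_comm]
      gcongr
      exact hc t ⟨ht.1, ht.2.le⟩)
  simpa [h0, h1] using this

lemma Hc_Rm {n : ℕ} (p : Fin n × Fin n) (θ : ℝ) : Hc (Rm θ p) := by
  refine Hc_curve (fun t => Rm (θ * t) p) (fun _ => θ • Jm p) ‖θ • Jm p‖ (by simp [Rm_zero])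
    (by simp) (fun t => Rm_mem _ _) (fun t => ?_) (fun t => by simp [Jm_tr]) (fun t _ => le_rfl)
  have hs : HasDerivAt (fun t => Real.sin (θ * t)) (Real.cos (θ * t) * θ) t := by
    simpa using ((hasDerivAt_id t).const_mul θ).sin
  have hcs : HasDerivAt (fun t => 1 - Real.cos (θ * t)) (Real.sin (θ * t) * θ) t := by
    simpa using (((hasDerivAt_id t).const_mul θ).cos).const_sub 1
  have := ((hs.smul_const (Jm p)).const_add (1 : Mt n)).add (hcs.smul_const (Jm p * Jm p))
  have e : (θ • Jm p) * Rm (θ * t) p = (Real.cos (θ * t) * θ) • Jm p + (Real.sin (θ * t) * θ) • (Jm p * Jm p) := by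
    have h3' : Jm p * (Jm p * Jm p) = - Jm p := by rw [← Matrix.mul_assoc, Jm_cube]
    simp only [Rm, Matrix.mul_add, Matrix.smul_mul, Matrix.mul_smul, h3', Matrix.mul_one]
    module
  rw [e]
  exact this

lemma skew_inv {n : ℕ} {A : Mt n} (hA : Aᵀ = -A) (t : ℝ) : IsUnit (1 + t • A).det := by
  rw [isUnit_iff_ne_zero]
  intro h0
  obtain ⟨x, hx, hx0⟩ := Matrix.exists_mulVec_eq_zero_iff.2 h0
  have h1 : x ⬝ᵥ ((1 + t • A) *ᵥ x) = 0 := by rw [hx0]; simp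
  rw [Matrix.add_mulVec, Matrix.one_mulVec, dotProduct_add, Matrix.smul_mulVec, dotProduct_smul] at h1
  have h2 : x ⬝ᵥ (A *ᵥ x) = 0 := by
    have e : x ⬝ᵥ (A *ᵥ x) = x ⬝ᵥ (Aᵀ *ᵥ x) := by
      rw [Matrix.mulVec_transpose, dotProduct_comm x (x ᵥ* A), ← Matrix.dotProduct_mulVec]
    rw [hA, Matrix.neg_mulVec, dotProduct_neg] at e
    linarith
  rw [h2] at h1
  simp at h1
  exact hx h1

lemma Hc_cayley {n : ℕ} {S : Mt n} (hS : Sᵀ * S = 1) (hu : IsUnit (1 + S).det) : Hc S := by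
  have hS' : S * Sᵀ = 1 := mul_eq_one_comm.1 hS
  set W := (1 + S)⁻¹ with hW
  have w1 : W * (1 + S) = 1 := Matrix.nonsing_inv_mul _ hu
  have w2 : (1 + S) * W = 1 := Matrix.mul_nonsing_inv _ hu
  set A : Mt n := (2:ℝ) • W - 1 with hAd
  have hA : Aᵀ = - A := by
    have hut : IsUnit (1 + Sᵀ).det := by
      have : (1 + Sᵀ) = (1 + S)ᵀ := by simp
      rw [this, Matrix.det_transpose]; exact hu
    have hWt : Wᵀ = (1 + Sᵀ)⁻¹ := by rw [hW, Matrix.transpose_nonsing_inv]; simp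
    have e : Wᵀ = S * W := by
      rw [hWt]
      refine Matrix.inv_eq_right_inv ?_
      have : (1 + Sᵀ) * S = 1 + S := by rw [Matrix.add_mul, hS, Matrix.one_mul, add_comm]
      rw [← Matrix.mul_assoc, this, w2]
    have e2 : S * W = 1 - W := by
      rw [← w2, Matrix.add_mul, Matrix.one_mul]; abel
    rw [hAd, Matrix.transpose_sub, Matrix.transpose_smul, e, e2, Matrix.transpose_one]
    module
  set U : ℝ → Mt n := fun t => 1 + t • A with hU
  have hUu : ∀ t, IsUnit (U t).det := skew_inv hA
  have u1 : ∀ t, (U t)⁻¹ * U t = 1 := fun t => Matrix.nonsing_inv_mul _ (hUu t)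
  have u2 : ∀ t, U t * (U t)⁻¹ = 1 := fun t => Matrix.mul_nonsing_inv _ (hUu t)
  have hUt : ∀ t, (U t)ᵀ = (2:ℝ) • 1 - U t := fun t => by
    simp only [hU, Matrix.transpose_add, Matrix.transpose_smul, hA, Matrix.transpose_one]; module
  have hinv : ∀ t, HasDerivAt (fun t => (U t)⁻¹) (-((U t)⁻¹ * A * (U t)⁻¹)) t := by
    intro t
    have d1 : HasDerivAt U A t := by
      have d0 := ((hasDerivAt_id t).smul_const A).const_add (1 : Mt n)
      rw [one_smul] at d0
      exact d0
    obtain ⟨u, hu'⟩ := (Matrix.isUnit_iff_isUnit_det _).2 (hUu t)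
    have d2 := hasFDerivAt_ringInverse (𝕜 := ℝ) u
    rw [hu'] at d2
    have d3 := d2.comp_hasDerivAt t d1
    have eu : (↑u⁻¹ : Mt n) = (U t)⁻¹ := by rw [← hu', Matrix.coe_units_inv]
    simp only [ContinuousLinearMap.neg_apply, ContinuousLinearMap.mulLeftRight_apply, eu] at d3
    have ef : (fun t => (U t)⁻¹) = Ring.inverse ∘ U := by
      funext t; simp [Matrix.nonsing_inv_eq_ringInverse]
    rw [ef]; exact d3
  set γ : ℝ → Mt n := fun t => (2:ℝ) • (U t)⁻¹ - 1 with hγ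
  have g1 : ∀ t, γ t = (U t)ᵀ * (U t)⁻¹ := fun t => by
    rw [hUt, Matrix.sub_mul, u2, Matrix.smul_mul, Matrix.one_mul]
  set B : ℝ → Mt n := fun t => -(2:ℝ) • ((U t)⁻¹ * A * ((U t)⁻¹)ᵀ) with hB
  have u3 : ∀ t, ((U t)⁻¹)ᵀ * (U t)ᵀ = 1 := fun t => by rw [← Matrix.transpose_mul, u2, Matrix.transpose_one]
  have u4 : ∀ t, (U t)ᵀ * ((U t)⁻¹)ᵀ = 1 := fun t => by rw [← Matrix.transpose_mul, u1, Matrix.transpose_one]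
  have comm : ∀ t, U t * (U t)ᵀ = (U t)ᵀ * U t := fun t => by
    rw [hUt, Matrix.mul_sub, Matrix.sub_mul]; simp
  have gd : ∀ t, γ t ∈ SOs n := fun t => by
    constructor
    · rw [g1, Matrix.transpose_mul, Matrix.transpose_transpose]
      calc ((U t)⁻¹)ᵀ * U t * ((U t)ᵀ * (U t)⁻¹) = ((U t)⁻¹)ᵀ * (U t * (U t)ᵀ) * (U t)⁻¹ := by
            simp only [Matrix.mul_assoc]
        _ = (((U t)⁻¹)ᵀ * (U t)ᵀ) * (U t * (U t)⁻¹) := by rw [comm]; simp only [Matrix.mul_assoc]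
        _ = 1 := by rw [u3, u2, Matrix.one_mul]
    · rw [g1, Matrix.det_mul, Matrix.det_transpose, ← Matrix.det_mul, u2, Matrix.det_one]
  have cU : Continuous fun t => (U t)⁻¹ := continuous_iff_continuousAt.2 fun t => (hinv t).continuousAt
  have cB : Continuous B := by
    have : Continuous fun t => ((U t)⁻¹)ᵀ := cU.matrix_transpose
    exact Continuous.const_smul (g := fun t => (U t)⁻¹ * A * ((U t)⁻¹)ᵀ)
      ((cU.matrix_mul continuous_const).matrix_mul this) (-(2:ℝ))
  obtain ⟨c, hc⟩ := isCompact_Icc.exists_bound_of_continuousOn (cB.continuousOn (s := Set.Icc (0:ℝ) 1))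
  refine Hc_curve γ B c (by simp only [hγ, hU]; simp; module) ?_ gd (fun t => ?_) (fun t => ?_) hc
  · have : U 1 = (2:ℝ) • W := by simp only [hU, hAd]; module
    have : (U 1)⁻¹ = (1/2:ℝ) • (1 + S) := by
      rw [this]
      refine Matrix.inv_eq_right_inv ?_
      rw [Matrix.smul_mul, Matrix.mul_smul, w1]; module
    simp only [hγ, this]; module
  · have e : B t * γ t = (2:ℝ) • (-((U t)⁻¹ * A * (U t)⁻¹)) := by
      rw [g1, hB]
      simp only [Matrix.smul_mul]
      have : (U t)⁻¹ * A * ((U t)⁻¹)ᵀ * ((U t)ᵀ * (U t)⁻¹) = (U t)⁻¹ * A * (U t)⁻¹ := by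
        rw [Matrix.mul_assoc _ ((U t)⁻¹)ᵀ, ← Matrix.mul_assoc ((U t)⁻¹)ᵀ, u3, Matrix.one_mul]
      rw [this]; module
    rw [e]
    exact ((hinv t).const_smul (2:ℝ)).sub_const 1
  · simp only [hB, Matrix.transpose_neg, Matrix.transpose_smul, Matrix.transpose_mul, Matrix.transpose_transpose, hA,
      Matrix.mul_neg, Matrix.neg_mul, Matrix.mul_assoc, smul_neg, neg_smul, neg_neg]

lemma exists_sign {n : ℕ} (S : Mt n) : ∃ d : Fin n → ℝ, (∀ i, d i = 1 ∨ d i = -1) ∧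
    (Matrix.diagonal d + S).det ≠ 0 := by
  by_contra hcon
  push Not at hcon
  have key : ∑ d ∈ Fintype.piFinset (fun _ : Fin n => ({1, -1} : Finset ℝ)),
      (∏ i, d i) * (Matrix.diagonal d + S).det = 2 ^ n := by
    simp only [Matrix.det_apply', Finset.mul_sum]
    rw [Finset.sum_comm]
    have hσ : ∀ σ : Equiv.Perm (Fin n), ∑ d ∈ Fintype.piFinset (fun _ : Fin n => ({1, -1} : Finset ℝ)),
        (∏ i, d i) * (((Equiv.Perm.sign σ : ℤ) : ℝ) * ∏ i, (Matrix.diagonal d + S) (σ i) i) =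
        ((Equiv.Perm.sign σ : ℤ) : ℝ) * ∏ i, (if σ i = i then 2 else 0) := by
      intro σ
      have : ∀ d : Fin n → ℝ, (∏ i, d i) * (((Equiv.Perm.sign σ : ℤ) : ℝ) * ∏ i, (Matrix.diagonal d + S) (σ i) i)
        = ((Equiv.Perm.sign σ : ℤ) : ℝ) * ∏ i, (d i * ((if σ i = i then d i else 0) + S (σ i) i)) := by
        intro d
        rw [Finset.prod_mul_distrib]
        have : ∀ i, (Matrix.diagonal d + S) (σ i) i = (if σ i = i then d i else 0) + S (σ i) i := by
          intro i
          rw [Matrix.add_apply, Matrix.diagonal_apply]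
          split_ifs with h <;> simp [h]
        simp only [this]; ring
      simp only [this]
      rw [← Finset.mul_sum]
      congr 1
      rw [← Finset.prod_univ_sum (fun _ : Fin n => ({1, -1} : Finset ℝ))
        (fun i x => x * ((if σ i = i then x else 0) + S (σ i) i))]
      refine Finset.prod_congr rfl fun i _ => ?_
      rw [Finset.sum_pair (by norm_num)]
      split_ifs <;> ring
    rw [Finset.sum_congr rfl fun σ _ => hσ σ, Finset.sum_eq_single 1]
    · simp
    · intro σ _ hσ1
      obtain ⟨i, hi⟩ : ∃ i, σ i ≠ i := by
        by_contra h; push Not at h; exact hσ1 (Equiv.ext h)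
      rw [Finset.prod_eq_zero (Finset.mem_univ i) (by simp [hi]), mul_zero]
    · simp
  rw [Finset.sum_eq_zero] at key
  · have : (0:ℝ) < 2 ^ n := by positivity
    linarith
  · intro d hd
    rw [hcon d, mul_zero]
    intro i
    have := Fintype.mem_piFinset.1 hd i
    simpa using this

lemma Hc_diag {n : ℕ} : ∀ (k : ℕ) (d : Fin n → ℝ), (∀ i, d i = 1 ∨ d i = -1) → ∏ i, d i = 1 →
    (Finset.univ.filter fun i => d i = -1).card ≤ k → Hc (Matrix.diagonal d) := by
  intro k
  induction k with
  | zero =>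
    intro d hd _ hk
    have : d = 1 := by
      funext i
      rcases hd i with h | h
      · exact h
      · have : i ∈ Finset.univ.filter fun i => d i = -1 := by simp [h]
        rw [Finset.card_eq_zero.1 (Nat.le_zero.1 hk)] at this
        simp at this
    rw [this]; simpa using Hc_one
  | succ k ih =>
    intro d hd hp hk
    by_cases hall : ∀ i, d i = 1
    · have : d = 1 := funext hall
      rw [this]; simpa using Hc_one
    push Not at hall
    obtain ⟨a, ha⟩ := hall
    have ha' : d a = -1 := (hd a).resolve_left ha
    obtain ⟨b, hba, hb⟩ : ∃ b, b ≠ a ∧ d b = -1 := by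
      by_contra h
      push Not at h
      rw [Finset.prod_eq_single a] at hp
      · linarith
      · intro b _ hb; exact (hd b).resolve_right (h b hb)
      · simp
    set d' : Fin n → ℝ := fun i => if i = a ∨ i = b then 1 else d i with hd'
    have hdd : Matrix.diagonal d = Rm Real.pi (a, b) * Matrix.diagonal d' := by
      have hJ := Jm_sq (p := (a, b)) (fun h => hba h.symm)
      have hR : Rm Real.pi (a, b) = Matrix.diagonal (fun i => if i = a ∨ i = b then (-1:ℝ) else 1) := by
        rw [Rm, hJ]
        ext i j
        by_cases hij : i = j
        · subst hij
          by_cases h1 : i = a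
          · subst h1; simp [hba]
          · by_cases h2 : i = b
            · subst h2; simp [h1, Ne.symm h1]
            · simp [h1, h2, Ne.symm h1, Ne.symm h2]
        · have k1 : ∀ c : Fin n, ¬ (c = i ∧ c = j) := fun c h => hij (h.1.symm.trans h.2)
          simp [hij, k1]
      rw [hR, Matrix.diagonal_mul_diagonal]
      congr 1
      funext i
      by_cases h1 : i = a
      · simp [hd', h1, ha']
      · by_cases h2 : i = b
        · simp [hd', h2, hb]
        · simp [hd', h1, h2]
    rw [hdd]
    refine Hc_mul (Hc_Rm _ _) (ih d' ?_ ?_ ?_)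
    · intro i; simp only [hd']; split_ifs
      · exact Or.inl rfl
      · exact hd i
    · have h1 := congrArg Matrix.det hdd
      rw [Matrix.det_mul, (Rm_mem _ _).2, Matrix.det_diagonal, Matrix.det_diagonal, one_mul] at h1
      rw [← h1, hp]
    · have : (Finset.univ.filter fun i => d' i = -1) ⊂ (Finset.univ.filter fun i => d i = -1) := by
        rw [Finset.ssubset_iff_of_subset]
        · refine ⟨a, by simp [ha'], ?_⟩
          simp [hd']; norm_num
        · intro i hi
          simp only [Finset.mem_filter, Finset.mem_univ, true_and, hd'] at hi ⊢
          split_ifs at hi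
          · norm_num at hi
          · exact hi
      have := Finset.card_lt_card this
      omega

lemma Hc_all {n : ℕ} {S : Mt n} (hS : S ∈ SOs n) : Hc S := by
  obtain ⟨d, hd, hdet⟩ := exists_sign S
  set D := Matrix.diagonal d with hD
  have hDD : D * D = 1 := by
    rw [hD, Matrix.diagonal_mul_diagonal, ← Matrix.diagonal_one]
    congr 1; funext i; rcases hd i with h | h <;> simp [h]
  have hDt : Dᵀ = D := Matrix.diagonal_transpose d
  have hDu : D.det ≠ 0 := by
    intro h; have := congrArg Matrix.det hDD; rw [Matrix.det_mul, h] at this; simp at this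
  have h1 : Hc (D * S) := by
    refine Hc_cayley ?_ ?_
    · rw [Matrix.transpose_mul, hDt, Matrix.mul_assoc, ← Matrix.mul_assoc D, hDD, Matrix.one_mul, hS.1]
    · have : 1 + D * S = D * (D + S) := by rw [Matrix.mul_add, hDD]
      rw [this, Matrix.det_mul, isUnit_iff_ne_zero]
      exact mul_ne_zero hDu hdet
  have h2 : D.det = 1 := by
    have := h1.1.2; rwa [Matrix.det_mul, hS.2, mul_one] at this
  have h3 : Hc D := Hc_diag n d hd (by rw [← h2, hD, Matrix.det_diagonal]) (by
    refine (Finset.card_le_univ _).trans ?_; simp)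
  have : S = D * (D * S) := by rw [← Matrix.mul_assoc, hDD, Matrix.one_mul]
  rw [this]; exact Hc_mul h3 h1
end SOD

noncomputable section SOE
open scoped Matrix.Norms.Frobenius

lemma two_d {e : ℝ} (he : 0 < e) (he1 : e ≤ 1) : e ^ 2 * (1 - 5 / 48 * e ^ 2) ≤ 2 * (1 - Real.cos e) := by
  have := (abs_le.1 (Real.cos_bound (x := e) (by rwa [abs_of_pos he]))).2
  rw [abs_of_pos he] at this
  nlinarith

lemma iter2 {n : ℕ} (hn : 3 ≤ n) {μ : Measure (Mt n)} (hμ : Hr μ) {f : Mt n → ℝ}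
    {g : Mt n → Mt n → ℝ} {K L : ℝ} (h : Nice f g K) (hL0 : 0 ≤ L) (hL : TLip g L) (s : ℝ)
    (P : ℕ) (hP : 1 ≤ P) (hs : |s| * (42 * K) ≤ P) :
    ∃ f' g', Nice f' g' K ∧ TLip g' (Real.exp (-(((n:ℝ) - 2) / (4 * n ^ 2) * P)) * L) ∧
      ∫ M, f' M ∂μ = ∫ M, f M ∂μ ∧
      ∫ M, Real.exp (s * f M) ∂μ ≤
      Real.exp (s ^ 2 / 2 * (4 * L ^ 2 / ((n:ℝ) - 2)) * (1 + 1 / P) +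
        (s ^ 2 / 2 * (1760 * K ^ 2) + |s| ^ 3 * (42 * K) ^ 3) * (1 / P)) *
        ∫ M, Real.exp (s * f' M) ∂μ := by
  have hP1 : (1:ℝ) ≤ P := by exact_mod_cast hP
  have hP0 : (0:ℝ) < P := by linarith
  have hn3 : (3:ℝ) ≤ n := by exact_mod_cast hn
  have hK := h.K0
  set e : ℝ := 1 / (P:ℝ) ^ 2 with he_def
  have he : 0 < e := by positivity
  have heP : e ≤ 1 / P := by
    rw [he_def]; gcongr; nlinarith
  have hPle : 1 / (P:ℝ) ≤ 1 := by rw [div_le_one hP0]; exact hP1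
  have he1 : e ≤ 1 := heP.trans hPle
  have hs' : |s| * (42 * K * e) ≤ 1 := by
    have : |s| * (42 * K * e) = |s| * (42 * K) * e := by ring
    rw [this]
    calc _ ≤ (P:ℝ) * (1 / P) := by gcongr
      _ = 1 := by field_simp
  obtain ⟨f', g', hN, hT, hm, hb⟩ := iter hn hμ h hL0 hL he he1 hs' (P ^ 5)
  obtain ⟨hq, hq2⟩ := qq_sq hn he he1
  have hd := two_d he he1
  set q := qq n e
  set d := 1 - Real.cos e with hd_def
  have hee : e ^ 2 ≤ 1 := by nlinarith
  have hd1 : e ^ 2 / 2 ≤ 2 * d := by nlinarith [sq_nonneg e]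
  have hdpos : 0 < d := by nlinarith [sq_pos_of_pos he]
  have hq2' : 1 - q ^ 2 = 2 * d * ((n:ℝ) - 2) / n ^ 2 := by rw [hq2]; ring
  have hq1 : q ^ 2 < 1 := by
    have : 0 < 2 * d * ((n:ℝ) - 2) / n ^ 2 := by
      have : 0 < (n:ℝ) - 2 := by linarith
      positivity
    linarith
  refine ⟨f', g', hN, ?_, hm, hb.trans ?_⟩
  · intro M hM A hA
    refine (hT M hM A hA).trans ?_
    gcongr
    have hsq : (q ^ P ^ 5) ^ 2 ≤ (Real.exp (-(((n:ℝ) - 2) / (4 * n ^ 2) * P))) ^ 2 := by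
      rw [← pow_mul, mul_comm, pow_mul]
      have h1 : q ^ 2 ≤ Real.exp (-(e ^ 2 / 2 * ((n:ℝ) - 2) / n ^ 2)) := by
        have h2 := Real.add_one_le_exp (-(e ^ 2 / 2 * ((n:ℝ) - 2) / n ^ 2))
        have h3 : e ^ 2 / 2 * ((n:ℝ) - 2) / n ^ 2 ≤ 2 * d * ((n:ℝ) - 2) / n ^ 2 := by
          have : 0 ≤ (n:ℝ) - 2 := by linarith
          gcongr
        linarith
      calc (q ^ 2) ^ P ^ 5 ≤ (Real.exp (-(e ^ 2 / 2 * ((n:ℝ) - 2) / n ^ 2))) ^ P ^ 5 := by gcongr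
        _ = _ := by
          rw [← Real.exp_nat_mul, ← Real.exp_nat_mul]
          congr 1
          rw [he_def]
          push_cast
          field_simp
          ring
    exact (abs_le_of_sq_le_sq' hsq (Real.exp_pos _).le).2
  · refine mul_le_mul_of_nonneg_right ?_ (integral_nonneg fun M => (Real.exp_pos (s * f' M)).le)
    rw [Real.exp_le_exp]
    refine add_le_add ?_ (le_of_eq ?_)
    · have hgeo : ∑ i ∈ Finset.range (P ^ 5), (q ^ 2) ^ i ≤ 1 / (1 - q ^ 2) := by
        have h1 := mul_neg_geom_sum (q ^ 2) (P ^ 5)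
        rw [le_div_iff₀ (by linarith), mul_comm, h1]
        have : 0 ≤ (q ^ 2) ^ P ^ 5 := by positivity
        linarith
      rw [hq2'] at hgeo
      have hn2 : 0 < (n:ℝ) - 2 := by linarith
      calc _ ≤ s ^ 2 / 2 * (4 * e ^ 2 / n ^ 2 * L ^ 2) * (1 / (2 * d * ((n:ℝ) - 2) / n ^ 2)) := by gcongr
        _ = s ^ 2 / 2 * (4 * L ^ 2 / ((n:ℝ) - 2)) * (e ^ 2 / (2 * d)) := by field_simp
        _ ≤ _ := by
          gcongr
          rw [div_le_iff₀ (by positivity)]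
          have : e ^ 2 ≤ 1 / P := by nlinarith
          have h3 : e ^ 2 ≤ (1 + e ^ 2) * (2 * d) := by
            have : (1 + e ^ 2) * (e ^ 2 * (1 - 5 / 48 * e ^ 2)) ≤ (1 + e ^ 2) * (2 * d) := by gcongr
            have e2 : 0 ≤ e ^ 2 := by positivity
            nlinarith [mul_nonneg e2 e2, mul_nonneg (mul_nonneg e2 e2) (sub_nonneg.2 hee)]
          refine h3.trans ?_
          gcongr
    · rw [he_def]; push_cast; field_simp

theorem mgf_nice {n : ℕ} (hn : 3 ≤ n) {μ : Measure (Mt n)} (hμ : Hr μ) {f : Mt n → ℝ}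
    {g : Mt n → Mt n → ℝ} {K L : ℝ} (h : Nice f g K) (hL0 : 0 ≤ L) (hL : TLip g L) (s : ℝ) :
    ∫ M, Real.exp (s * f M) ∂μ ≤
      Real.exp (s ^ 2 / 2 * (4 * L ^ 2 / ((n:ℝ) - 2))) * Real.exp (s * ∫ M, f M ∂μ) := by
  have hp := hμ.on.prob
  have hn3 : (3:ℝ) ≤ n := by exact_mod_cast hn
  obtain ⟨P0, hP0⟩ := exists_nat_ge (|s| * (42 * K))
  have hPs : ∀ p : ℕ, |s| * (42 * K) ≤ ((p + P0 + 1 : ℕ) : ℝ) := fun p => by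
    push_cast; have : (0:ℝ) ≤ p := Nat.cast_nonneg p; linarith
  choose F G hN hT hm hb using fun p : ℕ => iter2 hn hμ h hL0 hL s (p + P0 + 1) (by omega) (hPs p)
  have hN' : Filter.Tendsto (fun p : ℕ => ((p + P0 + 1 : ℕ) : ℝ)) Filter.atTop Filter.atTop := by
    refine tendsto_natCast_atTop_atTop.comp ?_
    exact Filter.tendsto_atTop_mono (fun p => by simp only [id]; omega) Filter.tendsto_id
  have hinv : Filter.Tendsto (fun p : ℕ => 1 / ((p + P0 + 1 : ℕ) : ℝ)) Filter.atTop (nhds 0) := by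
    refine hN'.inv_tendsto_atTop.congr fun p => ?_
    simp
  set κ := ((n:ℝ) - 2) / (4 * n ^ 2) with hκ
  have hκ0 : 0 < κ := by
    have : 0 < (n:ℝ) - 2 := by linarith
    positivity
  have hexp : Filter.Tendsto (fun p : ℕ => Real.exp (-(κ * ((p + P0 + 1 : ℕ) : ℝ))) * L) Filter.atTop (nhds 0) := by
    have := (Real.tendsto_exp_neg_atTop_nhds_zero.comp (hN'.const_mul_atTop hκ0)).mul_const L
    simpa using this
  have hpt : ∀ M ∈ SOs n, Filter.Tendsto (fun p => F p M - F p 1) Filter.atTop (nhds 0) := by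
    intro M hM
    obtain ⟨_, c, hc⟩ := Hc_all hM
    have hz := hexp.const_mul c
    rw [mul_zero] at hz
    refine squeeze_zero_norm (fun p => ?_) hz
    have := hc _ _ _ _ (hN p) (by positivity) (hT p) 1 so_one
    rw [Matrix.mul_one] at this
    exact this
  have hbd : ∀ p M, |F p M - F p 1| ≤ 2 * K := fun p M => by
    have h1 := (hN p).bd M
    have h2 := (hN p).bd 1
    refine (abs_sub _ _).trans ?_
    linarith
  have hK := h.K0
  have l1 : Filter.Tendsto (fun p => ∫ M, (F p M - F p 1) ∂μ) Filter.atTop (nhds 0) := by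
    have := tendsto_integral_of_dominated_convergence (μ := μ) (F := fun p M => F p M - F p 1)
      (f := fun _ => (0:ℝ)) (fun _ => 2 * K)
      (fun p => ((hN p).cont.sub continuous_const).aestronglyMeasurable) (integrable_const _)
      (fun p => Filter.Eventually.of_forall fun M => hbd p M)
      (by filter_upwards [hμ.on.ae] with M hM using hpt M hM)
    simpa using this
  have l2 : Filter.Tendsto (fun p => F p 1) Filter.atTop (nhds (∫ M, f M ∂μ)) := by
    have e : ∀ p, F p 1 = (∫ M, f M ∂μ) - ∫ M, (F p M - F p 1) ∂μ := fun p => by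
      rw [integral_sub (hμ.on.int (hN p).cont) (integrable_const _), hm p]; simp
    have := l1.const_sub (∫ M, f M ∂μ)
    rw [sub_zero] at this
    exact this.congr fun p => (e p).symm
  have l3 : Filter.Tendsto (fun p => ∫ M, Real.exp (s * (F p M - F p 1)) ∂μ) Filter.atTop (nhds 1) := by
    have := tendsto_integral_of_dominated_convergence (μ := μ)
      (F := fun p M => Real.exp (s * (F p M - F p 1)))
      (f := fun _ => (1:ℝ)) (fun _ => Real.exp (|s| * (2 * K)))
      (fun p => (Real.continuous_exp.comp
        (continuous_const.mul ((hN p).cont.sub continuous_const))).aestronglyMeasurable)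
      (integrable_const _)
      (fun p => Filter.Eventually.of_forall fun M => by
        rw [Real.norm_eq_abs, abs_of_pos (Real.exp_pos _), Real.exp_le_exp]
        refine (le_abs_self _).trans ?_
        rw [abs_mul]; gcongr; exact hbd p M)
      (by
        filter_upwards [hμ.on.ae] with M hM
        have := ((Real.continuous_exp.tendsto _).comp ((hpt M hM).const_mul s))
        rw [mul_zero, Real.exp_zero] at this
        exact this)
    simpa using this
  have e3 : ∀ p, ∫ M, Real.exp (s * F p M) ∂μ = Real.exp (s * F p 1) *
      ∫ M, Real.exp (s * (F p M - F p 1)) ∂μ := fun p => by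
    rw [← integral_const_mul]
    congr 1; funext M
    rw [← Real.exp_add]; congr 1; ring
  have l4 : Filter.Tendsto (fun p : ℕ => Real.exp (s ^ 2 / 2 * (4 * L ^ 2 / ((n:ℝ) - 2)) * (1 + 1 / ((p + P0 + 1 : ℕ) : ℝ)) +
        (s ^ 2 / 2 * (1760 * K ^ 2) + |s| ^ 3 * (42 * K) ^ 3) * (1 / ((p + P0 + 1 : ℕ) : ℝ))) *
        (Real.exp (s * F p 1) * ∫ M, Real.exp (s * (F p M - F p 1)) ∂μ)) Filter.atTop
      (nhds (Real.exp (s ^ 2 / 2 * (4 * L ^ 2 / ((n:ℝ) - 2)) * (1 + 0) +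
        (s ^ 2 / 2 * (1760 * K ^ 2) + |s| ^ 3 * (42 * K) ^ 3) * 0) *
        (Real.exp (s * ∫ M, f M ∂μ) * 1))) := by
    refine Filter.Tendsto.mul ?_ (Filter.Tendsto.mul ?_ l3)
    · exact (Real.continuous_exp.tendsto _).comp
        (((hinv.const_add 1).const_mul _).add (hinv.const_mul _))
    · exact (Real.continuous_exp.tendsto _).comp (l2.const_mul s)
  have := ge_of_tendsto' l4 (fun p => by rw [← e3]; exact hb p)
  simpa using this
end SOE

noncomputable section SOF
open scoped Matrix.Norms.Frobenius

lemma avg_le {m : ℕ} {a : Fin m → ℝ} {b : ℝ} (hb : 0 ≤ b) (h : ∀ i, |a i| ≤ b) :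
    |(∑ i, a i) / (m : ℝ)| ≤ b := by
  rw [abs_div, abs_of_nonneg (Nat.cast_nonneg m : (0:ℝ) ≤ m)]
  refine div_le_of_le_mul₀ (Nat.cast_nonneg m) hb ?_
  refine (Finset.abs_sum_le_sum_abs _ _).trans ?_
  refine (Finset.sum_le_sum fun i _ => h i).trans_eq ?_
  simp [mul_comm]

/-- smoothed activation data -/
structure Act (φ ψ : ℝ → ℝ) (C D : ℝ) : Prop where
  D0 : 0 ≤ D
  b : ∀ x, |φ x| ≤ C
  b' : ∀ x, |ψ x| ≤ C
  l : ∀ x y, |φ (x + y) - φ x| ≤ C * |y|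
  l' : ∀ x y, |ψ x - ψ y| ≤ D * |x - y|
  t : ∀ x y, |φ (x + y) - φ x - ψ x * y| ≤ D * y ^ 2

lemma mvt {F F' : ℝ → ℝ} {c : ℝ} {a b : ℝ} (hF : ∀ x, HasDerivAt F (F' x) x)
    (h : ∀ x ∈ Set.uIcc a b, |F' x| ≤ c) : |F b - F a| ≤ c * |b - a| :=
  Convex.norm_image_sub_le_of_norm_hasDerivWithin_le (s := Set.uIcc a b)
    (fun x _ => (hF x).hasDerivWithinAt) h (convex_uIcc a b) Set.left_mem_uIcc Set.right_mem_uIcc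

lemma uIcc_dist {a b x : ℝ} (h : x ∈ Set.uIcc a b) : |x - a| ≤ |b - a| :=
  Set.abs_sub_left_of_mem_uIcc h

lemma smooth {φ : ℝ → ℝ} {C : ℝ} (hd : Differentiable ℝ φ) (hb : ∀ x, |φ x| ≤ C)
    (hb' : ∀ x, |deriv φ x| ≤ C) {h : ℝ} (hh : 0 < h) :
    ∃ φh ψh D, Act φh ψh C D ∧ ∀ x, |φh x - φ x| ≤ C * h := by
  have hC : 0 ≤ C := (abs_nonneg _).trans (hb 0)
  have hlip : ∀ x y, |φ y - φ x| ≤ C * |y - x| := fun x y =>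
    mvt (fun x => (hd x).hasDerivAt) fun x _ => hb' x
  set Φ : ℝ → ℝ := fun x => ∫ u in (0:ℝ)..x, φ u with hΦ
  have hΦd : ∀ x, HasDerivAt Φ (φ x) x := fun x =>
    intervalIntegral.integral_hasDerivAt_right (hd.continuous.intervalIntegrable _ _)
      hd.continuous.stronglyMeasurable.stronglyMeasurableAtFilter hd.continuous.continuousAt
  have hd1 : ∀ x, HasDerivAt (fun x => (Φ (x + h) - Φ x) / h) ((φ (x + h) - φ x) / h) x := fun x =>
    ((HasDerivAt.comp_add_const x h (hΦd (x + h))).sub (hΦd x)).div_const h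
  have b' : ∀ x, |(φ (x + h) - φ x) / h| ≤ C := fun x => by
    rw [abs_div, abs_of_pos hh, div_le_iff₀ hh]
    have := hlip x (x + h)
    simpa [abs_of_pos hh] using this
  have l' : ∀ x y, |(φ (x + h) - φ x) / h - (φ (y + h) - φ y) / h| ≤ 2 * C / h * |x - y| := by
    intro x y
    rw [← sub_div, abs_div, abs_of_pos hh, div_mul_eq_mul_div]
    gcongr
    have h1 := hlip (y + h) (x + h)
    have h2 := hlip y x
    have e : φ (x + h) - φ x - (φ (y + h) - φ y) = (φ (x + h) - φ (y + h)) - (φ x - φ y) := by ring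
    rw [e]
    refine (abs_sub _ _).trans ?_
    rw [add_sub_add_right_eq_sub] at h1
    linarith
  refine ⟨fun x => (Φ (x + h) - Φ x) / h, fun x => (φ (x + h) - φ x) / h, 2 * C / h,
    ⟨by positivity, ?_, b', ?_, l', ?_⟩, ?_⟩
  · intro x
    rw [abs_div, abs_of_pos hh, div_le_iff₀ hh]
    have := mvt (a := x) (b := x + h) hΦd fun x _ => hb x
    simpa [abs_of_pos hh] using this
  · intro x y
    have := mvt (a := x) (b := x + y) hd1 fun x _ => b' x
    simpa using this
  · intro x y
    have := mvt (a := x) (b := x + y) (c := 2 * C / h * |y|)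
      (F := fun z => (Φ (z + h) - Φ z) / h - ((φ (x + h) - φ x) / h) * z)
      (fun z => (hd1 z).sub ((hasDerivAt_id z).const_mul _)) (fun z hz => by
        rw [mul_one]
        refine (l' z x).trans ?_
        have := uIcc_dist hz
        rw [add_sub_cancel_left] at this
        gcongr)
    rw [add_sub_cancel_left, mul_assoc, ← sq, sq_abs] at this
    refine le_trans (le_of_eq ?_) this
    congr 1; ring
  · intro x
    have := mvt (a := x) (b := x + h) (c := C * h)
      (F := fun z => Φ z - φ x * z)
      (fun z => (hΦd z).sub ((hasDerivAt_id z).const_mul _)) (fun z hz => by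
        rw [mul_one]
        refine (hlip x z).trans ?_
        have := uIcc_dist hz
        rw [add_sub_cancel_left, abs_of_pos hh] at this
        gcongr)
    rw [add_sub_cancel_left, abs_of_pos hh] at this
    have e : (Φ (x + h) - Φ x) / h - φ x = (Φ (x + h) - φ x * (x + h) - (Φ x - φ x * x)) / h := by
      field_simp; ring
    rw [e, abs_div, abs_of_pos hh, div_le_iff₀ hh]
    exact this

section
variable {m k n : ℕ} (hm : m ≤ n) (hk : k ≤ n)

def Xc (v : Fin k → ℝ) (M : Mt n) (i : Fin m) : ℝ := (suoOfHaar hm hk M).mulVec v i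

lemma Xc_add (v : Fin k → ℝ) (M H : Mt n) (i : Fin m) :
    Xc hm hk v (M + H) i = Xc hm hk v M i + Xc hm hk v H i := by
  simp only [Xc, suoOfHaar, Matrix.submatrix_add, smul_add, Matrix.add_mulVec, Pi.add_apply]

lemma Xc_smul (v : Fin k → ℝ) (c : ℝ) (H : Mt n) (i : Fin m) :
    Xc hm hk v (c • H) i = c * Xc hm hk v H i := by
  simp only [Xc, suoOfHaar, Matrix.submatrix_smul, Pi.smul_apply]
  rw [smul_comm, Matrix.smul_mulVec, Pi.smul_apply, smul_eq_mul]

lemma Xc_sub (v : Fin k → ℝ) (M H : Mt n) (i : Fin m) :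
    Xc hm hk v (M - H) i = Xc hm hk v M i - Xc hm hk v H i := by
  have := Xc_add hm hk v (M - H) H i
  rw [sub_add_cancel] at this; linarith

lemma Xc_sq {v : Fin k → ℝ} (hk0 : 0 < k) (hv : v ⬝ᵥ v = (k : ℝ)) (H : Mt n) :
    ∑ i, (Xc hm hk v H i) ^ 2 ≤ n * ‖H‖ ^ 2 := by
  have hk' : (0:ℝ) < k := by exact_mod_cast hk0
  have e : ∀ i, (Xc hm hk v H i) ^ 2 ≤ (n / k) * ((∑ j : Fin k, H (Fin.castLE hm i) (Fin.castLE hk j) ^ 2) * k) := by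
    intro i
    have : Xc hm hk v H i = Real.sqrt ((n:ℝ) / k) * ∑ j : Fin k, H (Fin.castLE hm i) (Fin.castLE hk j) * v j := by
      simp only [Xc, suoOfHaar, Matrix.mulVec, dotProduct, Matrix.smul_apply,
        Matrix.submatrix_apply, smul_eq_mul, Finset.mul_sum, mul_assoc]
    rw [this, mul_pow, Real.sq_sqrt (by positivity)]
    gcongr
    refine (Finset.sum_mul_sq_le_sq_mul_sq _ _ _).trans_eq ?_
    congr 1
    rw [← hv, dotProduct]
    simp [sq]
  calc _ ≤ ∑ i : Fin m, ((n:ℝ) / k) * ((∑ j : Fin k, H (Fin.castLE hm i) (Fin.castLE hk j) ^ 2) * k) :=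
        Finset.sum_le_sum fun i _ => e i
    _ = n * ∑ i : Fin m, ∑ j : Fin k, H (Fin.castLE hm i) (Fin.castLE hk j) ^ 2 := by
        rw [← Finset.mul_sum, ← Finset.sum_mul]; field_simp
    _ ≤ _ := by
        rw [nsq_sum]
        gcongr
        have inj : ∀ {a b : ℕ} (h : a ≤ b) (u : Fin b → ℝ), (∀ x, 0 ≤ u x) →
            ∑ i : Fin a, u (Fin.castLE h i) ≤ ∑ x, u x := by
          intro a b h u hu
          have h0 := Finset.sum_map Finset.univ (Fin.castLEEmb h) u
          refine le_trans (le_of_eq h0.symm) ?_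
          exact Finset.sum_le_sum_of_subset_of_nonneg (Finset.subset_univ _) fun x _ _ => hu x
        refine (Finset.sum_le_sum fun i _ => inj hk (fun j => H (Fin.castLE hm i) j ^ 2)
          fun j => sq_nonneg _).trans ?_
        exact inj hm (fun i => ∑ j, H i j ^ 2) fun i => Finset.sum_nonneg fun j _ => sq_nonneg _

lemma Xc_le {v : Fin k → ℝ} (hk0 : 0 < k) (hv : v ⬝ᵥ v = (k : ℝ)) (H : Mt n) (i : Fin m) :
    |Xc hm hk v H i| ≤ n * ‖H‖ := by
  have h1 := Xc_sq hm hk hk0 hv H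
  have h2 : (Xc hm hk v H i) ^ 2 ≤ ∑ i, (Xc hm hk v H i) ^ 2 :=
    Finset.single_le_sum (f := fun i => (Xc hm hk v H i) ^ 2) (fun i _ => sq_nonneg _) (Finset.mem_univ i)
  have hn1 : (1:ℝ) ≤ n := by
    have : 1 ≤ n := by omega
    exact_mod_cast this
  refine abs_le_of_sq_le_sq ?_ (by positivity)
  refine h2.trans (h1.trans ?_)
  rw [mul_pow]
  gcongr
  nlinarith

lemma Xc_l1 {v : Fin k → ℝ} (hk0 : 0 < k) (hv : v ⬝ᵥ v = (k : ℝ)) (H : Mt n) :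
    ∑ i, |Xc hm hk v H i| ≤ Real.sqrt (m * n) * ‖H‖ := by
  refine le_of_sq_le_sq ?_ (by positivity)
  have := Finset.sum_mul_sq_le_sq_mul_sq Finset.univ (fun _ : Fin m => (1:ℝ)) (fun i => |Xc hm hk v H i|)
  simp only [one_mul, one_pow, sq_abs, Finset.sum_const, Finset.card_univ, Fintype.card_fin, nsmul_eq_mul, mul_one] at this
  refine this.trans ?_
  rw [mul_pow, Real.sq_sqrt (by positivity), mul_assoc]
  gcongr
  exact Xc_sq hm hk hk0 hv H

def Fk (φ : ℝ → ℝ) (v v' : Fin k → ℝ) (M : Mt n) : ℝ := kernelF φ (suoOfHaar hm hk M) v v'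

def Gk (φ ψ : ℝ → ℝ) (v v' : Fin k → ℝ) (M H : Mt n) : ℝ :=
  (∑ i : Fin m, (ψ (Xc hm hk v M i) * φ (Xc hm hk v' M i) * Xc hm hk v H i +
    φ (Xc hm hk v M i) * ψ (Xc hm hk v' M i) * Xc hm hk v' H i)) / (m : ℝ)

lemma Fk_eq (φ : ℝ → ℝ) (v v' : Fin k → ℝ) (M : Mt n) : Fk hm hk φ v v' M =
  (∑ i : Fin m, φ (Xc hm hk v M i) * φ (Xc hm hk v' M i)) / (m : ℝ) := rfl

lemma kern_nice {v v' : Fin k → ℝ} (hk0 : 0 < k) (hv : v ⬝ᵥ v = (k : ℝ)) (hv' : v' ⬝ᵥ v' = (k : ℝ))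
    {φ ψ : ℝ → ℝ} {C D : ℝ} (h : Act φ ψ C D) :
    ∃ K, Nice (Fk hm hk φ v v') (Gk hm hk φ ψ v v') K := by
  have hC : 0 ≤ C := (abs_nonneg _).trans (h.b 0)
  have hD := h.D0
  have hn0 : (0:ℝ) ≤ n := Nat.cast_nonneg n
  set K1 := C * C with hK1
  set K2 := 2 * (C * C * n) with hK2
  set K3 := 2 * ((D * C + C * C) * n * n) with hK3
  set K4 := (2 * (C * D) + C * C) * n ^ 2 with hK4
  have k1 : 0 ≤ K1 := by positivity
  have k2 : 0 ≤ K2 := by positivity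
  have k3 : 0 ≤ K3 := by positivity
  have k4 : 0 ≤ K4 := by positivity
  have xl := fun H i => Xc_le hm hk hk0 hv H i
  have xl' := fun H i => Xc_le hm hk hk0 hv' H i
  have lip : ∀ x y, |φ x - φ y| ≤ C * |x - y| := fun x y => by
    have := h.l y (x - y); rwa [add_sub_cancel] at this
  refine ⟨K1 + K2 + K3 + K4, fun M => ?_, fun M => ⟨fun H H' => ?_, fun c H => ?_⟩, fun M H => ?_,
    fun M M' H => ?_, fun M H => ?_⟩
  · rw [Fk_eq]
    refine (avg_le k1 fun i => ?_).trans (by linarith)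
    rw [abs_mul, hK1]
    exact mul_le_mul (h.b _) (h.b _) (abs_nonneg _) hC
  · simp only [Gk]
    rw [← add_div, ← Finset.sum_add_distrib]
    congr 1
    refine Finset.sum_congr rfl fun i _ => ?_
    rw [Xc_add, Xc_add]; ring
  · simp only [Gk, smul_eq_mul]
    rw [← mul_div_assoc, Finset.mul_sum]
    congr 1
    refine Finset.sum_congr rfl fun i _ => ?_
    rw [Xc_smul, Xc_smul]; ring
  · have : K2 * ‖H‖ ≤ (K1 + K2 + K3 + K4) * ‖H‖ := by gcongr; linarith
    refine (avg_le (by positivity) fun i => ?_).trans this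
    refine (abs_add_le _ _).trans ?_
    rw [abs_mul, abs_mul, abs_mul, abs_mul]
    calc _ ≤ C * C * (n * ‖H‖) + C * C * (n * ‖H‖) := by
          gcongr
          · exact h.b' _
          · exact h.b _
          · exact xl _ _
          · exact h.b _
          · exact h.b' _
          · exact xl' _ _
      _ = _ := by rw [hK2]; ring
  · have : K3 * ‖M - M'‖ * ‖H‖ ≤ (K1 + K2 + K3 + K4) * ‖M - M'‖ * ‖H‖ := by gcongr; linarith
    refine le_trans ?_ this
    simp only [Gk]
    rw [← sub_div, ← Finset.sum_sub_distrib]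
    refine avg_le (by positivity) fun i => ?_
    set x := Xc hm hk v M i with hx
    set x' := Xc hm hk v' M i with hx'
    set z := Xc hm hk v M' i with hz
    set z' := Xc hm hk v' M' i with hz'
    have dx : |x - z| ≤ n * ‖M - M'‖ := by rw [hx, hz, ← Xc_sub]; exact xl _ _
    have dx' : |x' - z'| ≤ n * ‖M - M'‖ := by rw [hx', hz', ← Xc_sub]; exact xl' _ _
    have c1 : |ψ x * φ x' - ψ z * φ z'| ≤ (D * C + C * C) * (n * ‖M - M'‖) := by
      have e : ψ x * φ x' - ψ z * φ z' = (ψ x - ψ z) * φ x' + ψ z * (φ x' - φ z') := by ring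
      rw [e]
      refine (abs_add_le _ _).trans ?_
      rw [abs_mul, abs_mul]
      calc _ ≤ D * (n * ‖M - M'‖) * C + C * (C * (n * ‖M - M'‖)) := by
            gcongr
            · exact (h.l' _ _).trans (by gcongr)
            · exact h.b _
            · exact h.b' _
            · exact (lip _ _).trans (by gcongr)
        _ = _ := by ring
    have c2 : |φ x * ψ x' - φ z * ψ z'| ≤ (D * C + C * C) * (n * ‖M - M'‖) := by
      have e : φ x * ψ x' - φ z * ψ z' = (ψ x' - ψ z') * φ x + ψ z' * (φ x - φ z) := by ring
      rw [e]
      refine (abs_add_le _ _).trans ?_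
      rw [abs_mul, abs_mul]
      calc _ ≤ D * (n * ‖M - M'‖) * C + C * (C * (n * ‖M - M'‖)) := by
            gcongr
            · exact (h.l' _ _).trans (by gcongr)
            · exact h.b _
            · exact h.b' _
            · exact (lip _ _).trans (by gcongr)
        _ = _ := by ring
    have e : ψ x * φ x' * Xc hm hk v H i + φ x * ψ x' * Xc hm hk v' H i -
        (ψ z * φ z' * Xc hm hk v H i + φ z * ψ z' * Xc hm hk v' H i) =
        (ψ x * φ x' - ψ z * φ z') * Xc hm hk v H i + (φ x * ψ x' - φ z * ψ z') * Xc hm hk v' H i := by ring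
    rw [e]
    refine (abs_add_le _ _).trans ?_
    rw [abs_mul, abs_mul]
    calc _ ≤ (D * C + C * C) * (n * ‖M - M'‖) * (n * ‖H‖) + (D * C + C * C) * (n * ‖M - M'‖) * (n * ‖H‖) := by
          gcongr
          · exact xl _ _
          · exact xl' _ _
      _ = _ := by rw [hK3]; ring
  · have : K4 * ‖H‖ ^ 2 ≤ (K1 + K2 + K3 + K4) * ‖H‖ ^ 2 := by gcongr; linarith
    refine le_trans ?_ this
    rw [Fk_eq, Fk_eq, Gk, ← sub_div, ← sub_div, ← Finset.sum_sub_distrib, ← Finset.sum_sub_distrib]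
    refine avg_le (by positivity) fun i => ?_
    rw [Xc_add, Xc_add]
    have hy := xl H i
    have hy' := xl' H i
    set x := Xc hm hk v M i
    set x' := Xc hm hk v' M i
    set y := Xc hm hk v H i
    set y' := Xc hm hk v' H i
    have e : φ (x + y) * φ (x' + y') - φ x * φ x' - (ψ x * φ x' * y + φ x * ψ x' * y') =
        (φ (x + y) - φ x - ψ x * y) * φ (x' + y') + ψ x * y * (φ (x' + y') - φ x') +
          φ x * (φ (x' + y') - φ x' - ψ x' * y') := by ring
    rw [e]
    have sy : y ^ 2 ≤ (n * ‖H‖) ^ 2 := by rw [← sq_abs]; gcongr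
    have sy' : y' ^ 2 ≤ (n * ‖H‖) ^ 2 := by rw [← sq_abs]; gcongr
    refine (abs_add_three _ _ _).trans ?_
    rw [abs_mul, abs_mul, abs_mul, abs_mul]
    calc _ ≤ D * (n * ‖H‖) ^ 2 * C + C * (n * ‖H‖) * (C * (n * ‖H‖)) + C * (D * (n * ‖H‖) ^ 2) := by
          gcongr
          · exact (h.t _ _).trans (by gcongr)
          · exact h.b _
          · exact h.b' _
          · exact (h.l _ _).trans (by gcongr)
          · exact h.b _
          · exact (h.t _ _).trans (by gcongr)
      _ = _ := by rw [hK4]; ring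

lemma kern_tlip {v v' : Fin k → ℝ} (hm0 : 0 < m) (hk0 : 0 < k) (hv : v ⬝ᵥ v = (k : ℝ))
    (hv' : v' ⬝ᵥ v' = (k : ℝ)) {φ ψ : ℝ → ℝ} {C D : ℝ} (h : Act φ ψ C D) :
    TLip (Gk hm hk φ ψ v v') (2 * C ^ 2 * Real.sqrt (m * n) / m) := by
  intro M hM A _
  have hC : 0 ≤ C := (abs_nonneg _).trans (h.b 0)
  have hm' : (0:ℝ) < m := by exact_mod_cast hm0
  rw [← norm_mul_orth hM.1 A]
  set H := A * M
  rw [Gk, abs_div, abs_of_pos hm', div_mul_eq_mul_div]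
  gcongr
  refine (Finset.abs_sum_le_sum_abs _ _).trans ?_
  calc _ ≤ ∑ i : Fin m, (C * C * |Xc hm hk v H i| + C * C * |Xc hm hk v' H i|) := by
        refine Finset.sum_le_sum fun i _ => (abs_add_le _ _).trans ?_
        rw [abs_mul, abs_mul, abs_mul, abs_mul]
        gcongr
        · exact h.b' _
        · exact h.b _
        · exact h.b _
        · exact h.b' _
    _ = C * C * ∑ i : Fin m, |Xc hm hk v H i| + C * C * ∑ i : Fin m, |Xc hm hk v' H i| := by
        rw [Finset.sum_add_distrib, ← Finset.mul_sum, ← Finset.mul_sum]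
    _ ≤ C * C * (Real.sqrt (m * n) * ‖H‖) + C * C * (Real.sqrt (m * n) * ‖H‖) := by
        gcongr
        · exact Xc_l1 hm hk hk0 hv H
        · exact Xc_l1 hm hk hk0 hv' H
    _ = _ := by ring

lemma Fk_close {φ φ' : ℝ → ℝ} {C δ : ℝ} (v v' : Fin k → ℝ) (hb : ∀ x, |φ x| ≤ C) (hb' : ∀ x, |φ' x| ≤ C)
    (hd : ∀ x, |φ' x - φ x| ≤ δ) (M : Mt n) :
    |Fk hm hk φ' v v' M - Fk hm hk φ v v' M| ≤ 2 * C * δ := by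
  have hC : 0 ≤ C := (abs_nonneg _).trans (hb 0)
  have hδ : 0 ≤ δ := (abs_nonneg _).trans (hd 0)
  rw [Fk_eq, Fk_eq, ← sub_div, ← Finset.sum_sub_distrib]
  refine avg_le (by positivity) fun i => ?_
  set x := Xc hm hk v M i
  set x' := Xc hm hk v' M i
  have e : φ' x * φ' x' - φ x * φ x' = (φ' x - φ x) * φ' x' + φ x * (φ' x' - φ x') := by ring
  rw [e]
  refine (abs_add_le _ _).trans ?_
  rw [abs_mul, abs_mul]
  calc _ ≤ δ * C + C * δ := by
        gcongr
        · exact hd _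
        · exact hb' _
        · exact hb _
        · exact hd _
    _ = _ := by ring

lemma Fk_cont {φ : ℝ → ℝ} (hφ : Continuous φ) (v v' : Fin k → ℝ) : Continuous (Fk hm hk φ v v') := by
  have : ∀ (v : Fin k → ℝ) (i : Fin m), Continuous fun M : Mt n => Xc hm hk v M i := by
    intro v i
    have e : (fun M : Mt n => Xc hm hk v M i) = fun M =>
        Real.sqrt ((n:ℝ) / k) * ∑ j : Fin k, M (Fin.castLE hm i) (Fin.castLE hk j) * v j := by
      funext M
      simp only [Xc, suoOfHaar, Matrix.mulVec, dotProduct, Matrix.smul_apply,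
        Matrix.submatrix_apply, smul_eq_mul, Finset.mul_sum, mul_assoc]
    rw [e]; fun_prop
  have e : Fk hm hk φ v v' = fun M =>
    (∑ i : Fin m, φ (Xc hm hk v M i) * φ (Xc hm hk v' M i)) / (m : ℝ) := rfl
  rw [e]; fun_prop

lemma kern_mgf (hn : 3 ≤ n) {v v' : Fin k → ℝ} (hm0 : 0 < m) (hk0 : 0 < k) (hv : v ⬝ᵥ v = (k : ℝ))
    (hv' : v' ⬝ᵥ v' = (k : ℝ)) {φ : ℝ → ℝ} {C : ℝ} (hd : Differentiable ℝ φ) (hb : ∀ x, |φ x| ≤ C)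
    (hb' : ∀ x, |deriv φ x| ≤ C) {μ : Measure (Mt n)} (hμ : Hr μ) (s : ℝ) :
    ∫ M, Real.exp (s * Fk hm hk φ v v' M) ∂μ ≤
      Real.exp (s ^ 2 / 2 * (16 * C ^ 4 * n / (m * ((n:ℝ) - 2)))) *
        Real.exp (s * ∫ M, Fk hm hk φ v v' M ∂μ) := by
  have hp := hμ.on.prob
  have hC : 0 ≤ C := (abs_nonneg _).trans (hb 0)
  have hm' : (0:ℝ) < m := by exact_mod_cast hm0
  have hn3 : (3:ℝ) ≤ n := by exact_mod_cast hn
  have hn2 : (0:ℝ) < n - 2 := by linarith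
  have cF := Fk_cont hm hk hd.continuous v v'
  have step : ∀ h : ℝ, 0 < h → ∫ M, Real.exp (s * Fk hm hk φ v v' M) ∂μ ≤
      Real.exp (4 * |s| * C ^ 2 * h) * (Real.exp (s ^ 2 / 2 * (16 * C ^ 4 * n / (m * ((n:ℝ) - 2)))) *
        Real.exp (s * ∫ M, Fk hm hk φ v v' M ∂μ)) := by
    intro h hh
    obtain ⟨φh, ψh, D, hA, hcl⟩ := smooth hd hb hb' hh
    obtain ⟨K, hN⟩ := kern_nice hm hk hk0 hv hv' hA
    have hT := kern_tlip hm hk hm0 hk0 hv hv' hA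
    have key := mgf_nice hn hμ hN (by positivity) hT s
    have hclose := fun M => Fk_close hm hk v v' hb hA.b hcl M
    have e1 : 4 * (2 * C ^ 2 * Real.sqrt (m * n) / m) ^ 2 / ((n:ℝ) - 2) =
        16 * C ^ 4 * n / (m * ((n:ℝ) - 2)) := by
      rw [div_pow, mul_pow, Real.sq_sqrt (by positivity)]
      field_simp; ring
    rw [e1] at key
    have h1 : ∫ M, Real.exp (s * Fk hm hk φ v v' M) ∂μ ≤
        ∫ M, Real.exp (2 * |s| * C ^ 2 * h) * Real.exp (s * Fk hm hk φh v v' M) ∂μ := by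
      have cN := hN.cont
      refine hμ.on.mono (by fun_prop) (by fun_prop) fun M _ => ?_
      rw [← Real.exp_add, Real.exp_le_exp]
      have : |s * (Fk hm hk φh v v' M - Fk hm hk φ v v' M)| ≤ |s| * (2 * C * (C * h)) := by
        rw [abs_mul]; gcongr; exact hclose M
      have := (abs_le.1 this).1
      linarith
    rw [integral_const_mul] at h1
    have h2 : |∫ M, (Fk hm hk φh v v' M - Fk hm hk φ v v' M) ∂μ| ≤ 2 * C * (C * h) :=
      hμ.on.abs_le fun M _ => hclose M
    rw [integral_sub (hμ.on.int hN.cont) (hμ.on.int cF)] at h2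
    have h3 : s * ∫ M, Fk hm hk φh v v' M ∂μ ≤ s * (∫ M, Fk hm hk φ v v' M ∂μ) + 2 * |s| * C ^ 2 * h := by
      have : |s * ((∫ M, Fk hm hk φh v v' M ∂μ) - ∫ M, Fk hm hk φ v v' M ∂μ)| ≤ |s| * (2 * C * (C * h)) := by
        rw [abs_mul]; gcongr
      have := (abs_le.1 this).2
      linarith
    refine h1.trans ((mul_le_mul_of_nonneg_left key (Real.exp_pos _).le).trans ?_)
    rw [← Real.exp_add, ← Real.exp_add, ← Real.exp_add, ← Real.exp_add, Real.exp_le_exp]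
    linarith
  have lim : Filter.Tendsto (fun h : ℝ => Real.exp (4 * |s| * C ^ 2 * h) * (Real.exp (s ^ 2 / 2 * (16 * C ^ 4 * n / (m * ((n:ℝ) - 2)))) *
        Real.exp (s * ∫ M, Fk hm hk φ v v' M ∂μ))) (nhdsWithin 0 (Set.Ioi 0))
      (nhds (Real.exp (4 * |s| * C ^ 2 * 0) * (Real.exp (s ^ 2 / 2 * (16 * C ^ 4 * n / (m * ((n:ℝ) - 2)))) *
        Real.exp (s * ∫ M, Fk hm hk φ v v' M ∂μ)))) := by
    refine Filter.Tendsto.mono_left (Continuous.tendsto (by fun_prop) 0) nhdsWithin_le_nhds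
  have := ge_of_tendsto lim (by filter_upwards [self_mem_nhdsWithin] with h hh using step h hh)
  simpa using this

lemma kern_conc (hn : 3 ≤ n) {v v' : Fin k → ℝ} (hm0 : 0 < m) (hk0 : 0 < k) (hv : v ⬝ᵥ v = (k : ℝ))
    (hv' : v' ⬝ᵥ v' = (k : ℝ)) {φ : ℝ → ℝ} {C : ℝ} (hd : Differentiable ℝ φ) (hb : ∀ x, |φ x| ≤ C)
    (hb' : ∀ x, |deriv φ x| ≤ C) {μ : Measure (Mt n)} (hμ : Hr μ) {r : ℝ} (hr : 0 ≤ r) :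
    μ {M | r ≤ |Fk hm hk φ v v' M - ∫ M', Fk hm hk φ v v' M' ∂μ|} ≤
        ENNReal.ofReal (2 * Real.exp
          (-(r ^ 2 * ((n : ℝ) - 2) * (m : ℝ)) / (32 * (n : ℝ) * C ^ 4))) := by
  have hp := hμ.on.prob
  have hm' : (0:ℝ) < m := by exact_mod_cast hm0
  have hn3 : (3:ℝ) ≤ n := by exact_mod_cast hn
  have hn2 : (0:ℝ) < n - 2 := by linarith
  have cF := Fk_cont hm hk hd.continuous v v'
  set E := ∫ M', Fk hm hk φ v v' M' ∂μ with hE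
  set c : ℝ≥0 := ⟨16 * C ^ 4 * n / (m * ((n:ℝ) - 2)), by positivity⟩ with hc
  have hcc : (c : ℝ) = 16 * C ^ 4 * n / (m * ((n:ℝ) - 2)) := rfl
  have hsub : HasSubgaussianMGF (fun M => Fk hm hk φ v v' M - E) c μ := by
    refine ⟨fun t => hμ.on.int (by fun_prop), fun t => ?_⟩
    have key := kern_mgf hm hk hn hm0 hk0 hv hv' hd hb hb' hμ t
    rw [← hE, ← hcc] at key
    have e : mgf (fun M => Fk hm hk φ v v' M - E) μ t =
        Real.exp (-(t * E)) * ∫ M, Real.exp (t * Fk hm hk φ v v' M) ∂μ := by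
      rw [mgf, ← integral_const_mul]
      congr 1; funext M
      rw [← Real.exp_add]; congr 1; ring
    rw [e]
    refine (mul_le_mul_of_nonneg_left key (Real.exp_pos _).le).trans_eq ?_
    rw [← Real.exp_add, ← Real.exp_add]; congr 1; ring
  have h1 := hsub.measure_ge_le hr
  have h2 := hsub.neg.measure_ge_le hr
  have hex : -r ^ 2 / (2 * (c:ℝ)) = -(r ^ 2 * ((n : ℝ) - 2) * (m : ℝ)) / (32 * (n : ℝ) * C ^ 4) := by
    rw [hcc]
    by_cases hC : C = 0
    · simp [hC]
    · field_simp; ring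
  rw [hex] at h1 h2
  have hsubset : {M | r ≤ |Fk hm hk φ v v' M - E|} ⊆ {M | r ≤ Fk hm hk φ v v' M - E} ∪
      {M | r ≤ (-fun M => Fk hm hk φ v v' M - E) M} := by
    intro M hM
    have hM2 : r ≤ |Fk hm hk φ v v' M - E| := hM
    rcases le_abs.1 hM2 with h | h
    · exact Or.inl h
    · exact Or.inr h
  have h3 : μ.real {M | r ≤ |Fk hm hk φ v v' M - E|} ≤ 2 * Real.exp
          (-(r ^ 2 * ((n : ℝ) - 2) * (m : ℝ)) / (32 * (n : ℝ) * C ^ 4)) := by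
    refine (measureReal_mono hsubset).trans ((measureReal_union_le _ _).trans ?_)
    linarith
  rw [← ofReal_measureReal]
  exact ENNReal.ofReal_le_ofReal h3
end
end SOF

/-- **Lemma (concentration step).** For differentiable `φ` with `‖φ‖_∞, ‖φ'‖_∞ ≤ C`,
`n = max k m ≥ 3`, `v, v'` with `‖v‖² = ‖v'‖² = k`, and `M` Haar-distributed on
`SO(n)`, with `V = √(n/k)·M₀` (`M₀` the top-left `m × k` submatrix of `M`) and
`g(x,x') = (1/m) φ(x)ᵀφ(x')`, for every `r ≥ 0` we have
`P(|g(Vv, Vv') - E[g(Vv, Vv')]| ≥ r) ≤ 2 exp(-r²(n-2)m/(32nC⁴))`. -/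
theorem so_kernel_concentration (m k : ℕ) (hm : 0 < m) (hk : 0 < k)
    (hn : 3 ≤ max k m)
    (φ : ℝ → ℝ) (C : ℝ) (hφdiff : Differentiable ℝ φ)
    (hφ : ∀ x, |φ x| ≤ C) (hφ' : ∀ x, |deriv φ x| ≤ C)
    (v v' : Fin k → ℝ) (hv : v ⬝ᵥ v = (k : ℝ)) (hv' : v' ⬝ᵥ v' = (k : ℝ))
    (μ : Measure (Matrix (Fin (max k m)) (Fin (max k m)) ℝ))
    (hμ : IsHaarSO (max k m) μ) :
    ∀ r : ℝ, 0 ≤ r →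
      μ {M | r ≤ |kernelF φ (suoOfHaar (le_max_right k m) (le_max_left k m) M) v v' -
          ∫ M', kernelF φ (suoOfHaar (le_max_right k m) (le_max_left k m) M') v v' ∂μ|} ≤
        ENNReal.ofReal (2 * Real.exp
          (-(r ^ 2 * (((max k m : ℕ) : ℝ) - 2) * (m : ℝ)) /
            (32 * ((max k m : ℕ) : ℝ) * C ^ 4))) := by
  intro r hr
  exact kern_conc (le_max_right k m) (le_max_left k m) hn hm hk hv hv' hφdiff hφ hφ'
    ⟨⟨hμ.1, hμ.2.1⟩, fun S hS => hμ.2.2 S hS.1 hS.2⟩ hr
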